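/- Existence and uniqueness of the holomorphic family of type-A Riesz distributions: Let k > 0. There exists a map R from ℂ to the tempered distributions on ℝⁿ such that (i) for every Schwartz function φ on ℝⁿ, the map μ ↦ ⟨R_μ, φ⟩ is entire on ℂ, and (ii) for every μ ∈ ℂ with Re μ > μ₀ and every Schwartz φ, ⟨R_μ, φ⟩ = (d_n(k)Γ_n(μ;k))^{−1} ∫_{ℝ₊ⁿ} φ(x) D(x)^{μ−μ₀−1} ω_k(x) dx (with the integral converging absolutely). Moreover, any two maps with properties (i) and (ii) coincide. -/

import Mathlib

/-!
The defining integral converges for `Re μ > μ₀ = k(n - 1)` because `D(x)^{μ-μ₀-1}` is then locally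
integrable and `ω_k` has polynomial growth. Uniqueness is the identity theorem for entire functions.

The continuation rests on a Bernstein-type identity for the Dunkl operators
`T_m f = ∂_m f + k ∑_{j ≠ m} (f - f ∘ σ_{mj}) / (x_m - x_j)`. Write `⟨f, s⟩` for the integral of
`f(x) ∏ x_l^{s_l} ω_k(x)` over the orthant. If `s` is the staircase
`(σ, …, σ, σ - 1, …, σ - 1)` whose entries `σ - 1` begin at the (zero-based) position `m`, and
`e_m` is the `m`-th unit vector, then
`⟨T_m f, s + e_m⟩ = -(σ + k(n - 1 - m)) ⟨f, s⟩` (`wInt_dunkl`). Climbing the staircase from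
`(σ - 1, …, σ - 1)` to `(σ, …, σ)` with `σ = μ - μ₀` gives
`⟨T_{n-1} ⋯ T_0 f, σ⟩ = (-1)^n ∏_{i<n} (μ - ki) ⟨f, σ - 1⟩`, and the product is exactly
`Γ_n(μ+1;k) / Γ_n(μ;k)`. Hence the normalised integral `F` satisfies
`F(μ, f) = (-1)^n F(μ + 1, T_{n-1} ⋯ T_0 f)` (`F_rec`). The right-hand side makes sense one unit
further to the left, so iterating it continues `F` to all of `ℂ` (`G`, `riesz`).

The one-step identity is proved by integration by parts. Since `ω_k` need not be differentiable on
the reflection hyperplanes, `(x_i - x_j)²` is first replaced by `(x_i - x_j)² + ε` (`V`). The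
derivative of the weight produces a kernel odd under `σ_{mj}`, and symmetrising the integral turns
it into the difference quotients in `T_m` plus a multiple of `⟨f, s⟩` (`wInt_ibp`, `wInt_ker`); then
`ε → 0` by dominated convergence.

The operators `T_m` have to act on test functions. The difference quotient is the average of
`∂_m f - ∂_j f` over the segment from `σ_{mj} x` to `x`, and this average preserves smoothness and,
on the orthant, rapid decay, since `∑ x_l` is constant along the segment (`Bd.avg`). The
distributions are therefore built on the space `W n` of smooth functions with rapidly decaying
derivatives on the orthant, which contains the Schwartz functions continuously
(`exists_seminorm`).
-/

open MeasureTheory Finset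

/-- The type-A Dunkl weight `ω_k(x) = ∏_{i<j} |x_i - x_j|^{2k}`. -/
noncomputable def wk (n : ℕ) (k : ℝ) (x : Fin n → ℝ) : ℝ :=
  ∏ i : Fin n, ∏ j ∈ Finset.Ioi i, |x i - x j| ^ (2 * k)

/-- The open positive orthant `ℝ₊ⁿ = (0,∞)ⁿ`. -/
def Rplus (n : ℕ) : Set (Fin n → ℝ) := {x | ∀ i, 0 < x i}

/-- The constant `d_n(k) = ∏_{j=1}^n Γ(1+jk)/Γ(1+k)`. -/
noncomputable def dnk (n : ℕ) (k : ℝ) : ℝ :=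
  ∏ j ∈ Finset.range n, Real.Gamma (1 + (j + 1) * k) / Real.Gamma (1 + k)

/-- The multivariable Gamma function `Γ_n(μ;k) = ∏_{j=1}^n Γ(μ - k(j-1))`. -/
noncomputable def Gammank (n : ℕ) (k : ℝ) (μ : ℂ) : ℂ :=
  ∏ j ∈ Finset.range n, Complex.Gamma (μ - ((k * (j : ℝ) : ℝ) : ℂ))

/-- A family of type-A Riesz distributions for multiplicity `k > 0`: a map `R : ℂ → 𝓢'(ℝⁿ)`
such that `μ ↦ ⟨R_μ, φ⟩` is entire for every Schwartz `φ`, and for `Re μ > μ₀ = k(n-1)`,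
`⟨R_μ, φ⟩ = (d_n(k)Γ_n(μ;k))⁻¹ ∫_{ℝ₊ⁿ} φ(x) D(x)^{μ-μ₀-1} ω_k(x) dx`. -/
def IsRieszFamily (n : ℕ) (k : ℝ)
    (R : ℂ → (SchwartzMap (Fin n → ℝ) ℂ →L[ℂ] ℂ)) : Prop :=
  (∀ φ : SchwartzMap (Fin n → ℝ) ℂ, Differentiable ℂ (fun μ => R μ φ)) ∧
  ∀ μ : ℂ, k * ((n : ℝ) - 1) < μ.re → ∀ φ : SchwartzMap (Fin n → ℝ) ℂ,
    R μ φ = ((dnk n k : ℂ) * Gammank n k μ)⁻¹ *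
      ∫ x in Rplus n,
        φ x * (∏ i, (x i : ℂ) ^ (μ - ((k * ((n : ℝ) - 1) : ℝ) : ℂ) - 1)) * (wk n k x : ℂ)

namespace Riesz

variable {n : ℕ}

/-! ### Segment averages of smooth functions with decay on the orthant -/

/-- The partial derivative `∂_l f`, as the Fréchet derivative applied to the `l`-th basis vector.
It is only used where `f` is `C¹`, so that `fderiv` does not take its junk value. -/
noncomputable def pd (l : Fin n) (f : (Fin n → ℝ) → ℂ) (x : Fin n → ℝ) : ℂ :=
  fderiv ℝ f x (Pi.single l 1)

/-- The weight `1 + x_1 + ⋯ + x_n`, comparable to `1 + ‖x‖` on the orthant. It is used in place of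
a norm because it is unchanged when `x` is replaced by a point of the segment joining `x` to a
permutation of its coordinates. -/
def sz (x : Fin n → ℝ) : ℝ := 1 + ∑ l, x l

/-- `Bd q C N f`: `f` is `N` times continuously differentiable (all iterated partial derivatives up
to order `N` are continuous), and each of these, `f` included, is bounded by `C (1 + ∑ x_l)^{-q}` on
the orthant. Regularity is required on all of `ℝⁿ`, decay only on the orthant. -/
def Bd (q : ℕ) (C : ℝ) : ℕ → ((Fin n → ℝ) → ℂ) → Prop
  | 0, f => Continuous f ∧ ∀ x ∈ Rplus n, sz x ^ q * ‖f x‖ ≤ C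
  | N + 1, f => ContDiff ℝ 1 f ∧ (∀ x ∈ Rplus n, sz x ^ q * ‖f x‖ ≤ C) ∧
      ∀ l, Bd q C N (pd l f)

lemma one_le_sz {x : Fin n → ℝ} (hx : x ∈ Rplus n) : 1 ≤ sz x := by
  have : 0 ≤ ∑ l, x l := Finset.sum_nonneg fun l _ => (hx l).le
  unfold sz; linarith

lemma Bd.bound {q : ℕ} {C : ℝ} {N : ℕ} {f : (Fin n → ℝ) → ℂ} (h : Bd q C N f) :
    ∀ x ∈ Rplus n, sz x ^ q * ‖f x‖ ≤ C := by
  cases N with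
  | zero => exact h.2
  | succ N => exact h.2.1

lemma Bd.cont {q : ℕ} {C : ℝ} {N : ℕ} {f : (Fin n → ℝ) → ℂ} (h : Bd q C N f) :
    Continuous f := by
  cases N with
  | zero => exact h.1
  | succ N => exact h.1.continuous

lemma Bd.zero {q : ℕ} {C : ℝ} {N : ℕ} {f : (Fin n → ℝ) → ℂ} (h : Bd q C N f) :
    Bd q C 0 f := ⟨h.cont, h.bound⟩

lemma Bd.nonneg {q : ℕ} {C : ℝ} {N : ℕ} {f : (Fin n → ℝ) → ℂ} (h : Bd q C N f) : 0 ≤ C := by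
  have h1 : (1 : Fin n → ℝ) ∈ Rplus n := fun i => one_pos
  have h2 := h.bound _ h1
  have h3 := one_le_sz h1
  exact le_trans (by positivity) h2

lemma Bd.mono {q : ℕ} {C C' : ℝ} (hC : C ≤ C') {N : ℕ} :
    ∀ {f : (Fin n → ℝ) → ℂ}, Bd q C N f → Bd q C' N f := by
  induction N with
  | zero => exact fun h => ⟨h.1, fun x hx => (h.2 x hx).trans hC⟩
  | succ N ih => exact fun h => ⟨h.1, fun x hx => (h.2.1 x hx).trans hC, fun l => ih (h.2.2 l)⟩

lemma Bd.pred {q : ℕ} {C : ℝ} {N : ℕ} :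
    ∀ {f : (Fin n → ℝ) → ℂ}, Bd q C (N + 1) f → Bd q C N f := by
  induction N with
  | zero => exact fun h => h.zero
  | succ N ih => exact fun h => ⟨h.1, h.2.1, fun l => ih (h.2.2 l)⟩

lemma pd_add {f g : (Fin n → ℝ) → ℂ} (hf : ContDiff ℝ 1 f) (hg : ContDiff ℝ 1 g) (l : Fin n) :
    pd l (f + g) = pd l f + pd l g := by
  ext x
  simp [pd, fderiv_add (hf.differentiable one_ne_zero x) (hg.differentiable one_ne_zero x)]

lemma pd_smul {f : (Fin n → ℝ) → ℂ} (hf : ContDiff ℝ 1 f) (c : ℂ) (l : Fin n) :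
    pd l (c • f) = c • pd l f := by
  ext x
  simp [pd, fderiv_const_smul (hf.differentiable one_ne_zero x)]

lemma Bd.add {q : ℕ} {C C' : ℝ} {N : ℕ} :
    ∀ {f g : (Fin n → ℝ) → ℂ}, Bd q C N f → Bd q C' N g → Bd q (C + C') N (f + g) := by
  have key : ∀ {f g : (Fin n → ℝ) → ℂ}, (∀ x ∈ Rplus n, sz x ^ q * ‖f x‖ ≤ C) →
      (∀ x ∈ Rplus n, sz x ^ q * ‖g x‖ ≤ C') →
      ∀ x ∈ Rplus n, sz x ^ q * ‖(f + g) x‖ ≤ C + C' := by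
    intro f g hf hg x hx
    have h1 := one_le_sz hx
    calc sz x ^ q * ‖(f + g) x‖ ≤ sz x ^ q * (‖f x‖ + ‖g x‖) := by
          gcongr; exact norm_add_le _ _
      _ ≤ _ := by linarith [hf x hx, hg x hx]
  induction N with
  | zero => exact fun hf hg => ⟨hf.1.add hg.1, key hf.2 hg.2⟩
  | succ N ih =>
    exact fun hf hg => ⟨hf.1.add hg.1, key hf.2.1 hg.2.1, fun l => by
      rw [pd_add hf.1 hg.1]; exact ih (hf.2.2 l) (hg.2.2 l)⟩

lemma Bd.smul {q : ℕ} {C : ℝ} {N : ℕ} (c : ℂ) :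
    ∀ {f : (Fin n → ℝ) → ℂ}, Bd q C N f → Bd q (‖c‖ * C) N (c • f) := by
  have key : ∀ {f : (Fin n → ℝ) → ℂ}, (∀ x ∈ Rplus n, sz x ^ q * ‖f x‖ ≤ C) →
      ∀ x ∈ Rplus n, sz x ^ q * ‖(c • f) x‖ ≤ ‖c‖ * C := by
    intro f hf x hx
    calc sz x ^ q * ‖(c • f) x‖ = ‖c‖ * (sz x ^ q * ‖f x‖) := by
          rw [Pi.smul_apply, norm_smul]; ring
      _ ≤ _ := by gcongr; exact hf x hx
  induction N with
  | zero => exact fun hf => ⟨continuous_const.smul hf.1, key hf.2⟩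
  | succ N ih =>
    exact fun hf => ⟨contDiff_const.smul hf.1, key hf.2.1, fun l => by
      rw [pd_smul hf.1]; exact ih (hf.2.2 l)⟩

/-- The permutation of coordinates `(perm τ x)_l = x_{τ l}`. -/
def perm (τ : Equiv.Perm (Fin n)) : (Fin n → ℝ) →L[ℝ] (Fin n → ℝ) :=
  ContinuousLinearMap.pi fun l => ContinuousLinearMap.proj (τ l)

@[simp] lemma perm_apply (τ : Equiv.Perm (Fin n)) (x : Fin n → ℝ) (l : Fin n) :
    perm τ x l = x (τ l) := rfl

/-- The point `t x + (1 - t) τx` of the segment between `x` and `perm τ x`, as a linear map in `x`. -/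
def mix (τ : Equiv.Perm (Fin n)) (t : ℝ) : (Fin n → ℝ) →L[ℝ] (Fin n → ℝ) :=
  t • ContinuousLinearMap.id ℝ _ + (1 - t) • perm τ

lemma mix_apply (τ : Equiv.Perm (Fin n)) (t : ℝ) (x : Fin n → ℝ) :
    mix τ t x = t • x + (1 - t) • perm τ x := rfl

lemma continuous_mix (τ : Equiv.Perm (Fin n)) : Continuous (mix τ) := by
  unfold mix; fun_prop

lemma mix_mem {τ : Equiv.Perm (Fin n)} {t : ℝ} (ht : t ∈ Set.Icc (0 : ℝ) 1) {x : Fin n → ℝ}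
    (hx : x ∈ Rplus n) : mix τ t x ∈ Rplus n := by
  intro l
  have h1 := hx l
  have h2 := hx (τ l)
  simp only [mix_apply, Pi.add_apply, Pi.smul_apply, perm_apply, smul_eq_mul]
  rcases ht.1.eq_or_lt with h | h
  · subst h; simpa using h2
  · have : 0 < t * x l := by positivity
    have : 0 ≤ (1 - t) * x (τ l) := mul_nonneg (by linarith [ht.2]) h2.le
    linarith

lemma sz_perm (τ : Equiv.Perm (Fin n)) (x : Fin n → ℝ) : sz (perm τ x) = sz x := by
  simp [sz, Equiv.sum_comp τ x]

lemma sz_mix (τ : Equiv.Perm (Fin n)) (t : ℝ) (x : Fin n → ℝ) : sz (mix τ t x) = sz x := by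
  have := Equiv.sum_comp τ x
  simp only [sz, mix_apply, Pi.add_apply, Pi.smul_apply, perm_apply, smul_eq_mul,
    Finset.sum_add_distrib, ← Finset.mul_sum, this]
  ring

/-- The weighted average `∫₀¹ w(t) f(t x + (1 - t) τx) dt` of `f` over the segment from `τx` to `x`.
The weight `w` is there because differentiating in `x` produces factors `t` and `1 - t`. -/
noncomputable def avg (τ : Equiv.Perm (Fin n)) (w : ℝ → ℝ) (f : (Fin n → ℝ) → ℂ)
    (x : Fin n → ℝ) : ℂ := ∫ t in (0 : ℝ)..1, (w t : ℂ) * f (mix τ t x)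

lemma continuous_avg_integrand {τ : Equiv.Perm (Fin n)} {w : ℝ → ℝ} (hw : Continuous w)
    {f : (Fin n → ℝ) → ℂ} (hf : Continuous f) :
    Continuous (fun p : (Fin n → ℝ) × ℝ => (w p.2 : ℂ) * f (mix τ p.2 p.1)) := by
  have := continuous_mix τ
  fun_prop

lemma avg_add {τ : Equiv.Perm (Fin n)} {w : ℝ → ℝ} (hw : Continuous w)
    {f g : (Fin n → ℝ) → ℂ} (hf : Continuous f) (hg : Continuous g) :
    avg τ w (f + g) = avg τ w f + avg τ w g := by
  ext x
  have h1 : Continuous fun t => (w t : ℂ) * f (mix τ t x) :=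
    (continuous_avg_integrand (τ := τ) hw hf).comp (Continuous.prodMk_right x)
  have h2 : Continuous fun t => (w t : ℂ) * g (mix τ t x) :=
    (continuous_avg_integrand (τ := τ) hw hg).comp (Continuous.prodMk_right x)
  simp only [avg, Pi.add_apply, mul_add]
  exact intervalIntegral.integral_add (h1.intervalIntegrable _ _) (h2.intervalIntegrable _ _)

lemma avg_smul {τ : Equiv.Perm (Fin n)} {w : ℝ → ℝ} (c : ℂ) (f : (Fin n → ℝ) → ℂ) :
    avg τ w (c • f) = c • avg τ w f := by
  ext x
  simp only [avg, Pi.smul_apply, smul_eq_mul, ← intervalIntegral.integral_const_mul]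
  congr 1; ext t; ring

lemma hasFDerivAt_avg {τ : Equiv.Perm (Fin n)} {w : ℝ → ℝ} (hw : Continuous w)
    {f : (Fin n → ℝ) → ℂ} (hf : ContDiff ℝ 1 f) (x : Fin n → ℝ) :
    HasFDerivAt (avg τ w f)
      (∫ t in (0 : ℝ)..1, (w t : ℂ) • (fderiv ℝ f (mix τ t x)).comp (mix τ t)) x := by
  have hfd : Continuous (fderiv ℝ f) := hf.continuous_fderiv one_ne_zero
  have hm := continuous_mix τ
  have hc : Continuous (fun p : (Fin n → ℝ) × ℝ =>
      (w p.2 : ℂ) • (fderiv ℝ f (mix τ p.2 p.1)).comp (mix τ p.2)) := by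
    have h1 : Continuous fun p : (Fin n → ℝ) × ℝ => mix τ p.2 p.1 := by fun_prop
    exact (Complex.continuous_ofReal.comp (hw.comp continuous_snd)).smul
      ((hfd.comp h1).clm_comp (hm.comp continuous_snd))
  obtain ⟨K, hK⟩ := ((isCompact_closedBall x 1).prod
    (isCompact_Icc (a := (0 : ℝ)) (b := 1))).exists_bound_of_continuousOn hc.continuousOn
  have hci := continuous_avg_integrand (τ := τ) hw hf.continuous
  refine (intervalIntegral.hasFDerivAt_integral_of_dominated_of_fderiv_le (s := Metric.ball x 1)
    (F := fun x t => (w t : ℂ) * f (mix τ t x))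
    (F' := fun x t => (w t : ℂ) • (fderiv ℝ f (mix τ t x)).comp (mix τ t))
    (bound := fun _ => K) (μ := volume) (Metric.ball_mem_nhds x one_pos) ?_ ?_ ?_ ?_ ?_ ?_)
  · exact Filter.Eventually.of_forall fun y =>
      (hci.comp (Continuous.prodMk_right y)).aestronglyMeasurable
  · exact (hci.comp (Continuous.prodMk_right x)).intervalIntegrable _ _
  · exact (hc.comp (Continuous.prodMk_right x)).aestronglyMeasurable
  · refine Filter.Eventually.of_forall fun t ht y hy => hK (y, t) ⟨Metric.ball_subset_closedBall hy, ?_⟩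
    rw [Set.uIoc_of_le zero_le_one] at ht
    exact ⟨ht.1.le, ht.2⟩
  · simp
  · refine Filter.Eventually.of_forall fun t ht y hy => ?_
    have h1 : HasFDerivAt (fun y => f (mix τ t y)) ((fderiv ℝ f (mix τ t y)).comp (mix τ t)) y :=
      (hf.differentiable one_ne_zero _).hasFDerivAt.comp y (mix τ t).hasFDerivAt
    exact h1.const_mul (w t : ℂ)

lemma contDiff_avg {τ : Equiv.Perm (Fin n)} {w : ℝ → ℝ} (hw : Continuous w)
    {f : (Fin n → ℝ) → ℂ} (hf : ContDiff ℝ 1 f) : ContDiff ℝ 1 (avg τ w f) := by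
  rw [contDiff_one_iff_hasFDerivAt]
  refine ⟨_, ?_, fun x => hasFDerivAt_avg hw hf x⟩
  have hfd : Continuous (fderiv ℝ f) := hf.continuous_fderiv one_ne_zero
  have hm := continuous_mix τ
  have hc : Continuous (fun p : (Fin n → ℝ) × ℝ =>
      (w p.2 : ℂ) • (fderiv ℝ f (mix τ p.2 p.1)).comp (mix τ p.2)) := by
    have h1 : Continuous fun p : (Fin n → ℝ) × ℝ => mix τ p.2 p.1 := by fun_prop
    exact (Complex.continuous_ofReal.comp (hw.comp continuous_snd)).smul
      ((hfd.comp h1).clm_comp (hm.comp continuous_snd))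
  exact intervalIntegral.continuous_parametric_intervalIntegral_of_continuous' hc 0 1

lemma mix_single (τ : Equiv.Perm (Fin n)) (t : ℝ) (l : Fin n) :
    mix τ t (Pi.single l 1) = t • Pi.single l 1 + (1 - t) • Pi.single (τ⁻¹ l) 1 := by
  rw [mix_apply]
  congr 2
  ext m
  simp only [perm_apply, Pi.single_apply, Equiv.Perm.eq_inv_iff_eq]

lemma pd_avg {τ : Equiv.Perm (Fin n)} {w : ℝ → ℝ} (hw : Continuous w)
    {f : (Fin n → ℝ) → ℂ} (hf : ContDiff ℝ 1 f) (l : Fin n) :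
    pd l (avg τ w f) = avg τ (fun t => w t * t) (pd l f) +
      avg τ (fun t => w t * (1 - t)) (pd (τ⁻¹ l) f) := by
  ext x
  have hfd : Continuous (fderiv ℝ f) := hf.continuous_fderiv one_ne_zero
  have hm := continuous_mix τ
  have hc : Continuous (fun t : ℝ =>
      (w t : ℂ) • (fderiv ℝ f (mix τ t x)).comp (mix τ t)) := by
    have h1 : Continuous fun t : ℝ => mix τ t x := by fun_prop
    exact (Complex.continuous_ofReal.comp hw).smul ((hfd.comp h1).clm_comp hm)
  have hp : ∀ l, Continuous (pd l f) := fun l => by unfold pd; fun_prop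
  have hi : ∀ (v : ℝ → ℝ) (hv : Continuous v) (l : Fin n),
      IntervalIntegrable (fun t => (v t : ℂ) * pd l f (mix τ t x)) volume 0 1 := fun v hv l =>
    ((continuous_avg_integrand hv (hp l)).comp (Continuous.prodMk_right x)).intervalIntegrable _ _
  rw [pd, (hasFDerivAt_avg hw hf x).fderiv,
    ContinuousLinearMap.intervalIntegral_apply (hc.intervalIntegrable _ _), Pi.add_apply, avg, avg,
    ← intervalIntegral.integral_add (hi _ (by fun_prop) _) (hi _ (by fun_prop) _)]
  congr 1; ext t
  simp only [smul_apply, ContinuousLinearMap.comp_apply, mix_single, map_add,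
    map_smul, pd, smul_eq_mul, Complex.real_smul]
  push_cast; ring

lemma avg_bound {q : ℕ} {C : ℝ} {τ : Equiv.Perm (Fin n)} {w : ℝ → ℝ}
    (hw1 : ∀ t ∈ Set.Icc (0 : ℝ) 1, |w t| ≤ 1)
    {f : (Fin n → ℝ) → ℂ} (hf : ∀ x ∈ Rplus n, sz x ^ q * ‖f x‖ ≤ C) :
    ∀ x ∈ Rplus n, sz x ^ q * ‖avg τ w f x‖ ≤ C := by
  intro x hx
  have h1 := one_le_sz hx
  have h2 : 0 < sz x ^ q := by positivity
  have : ‖avg τ w f x‖ ≤ C / sz x ^ q * |1 - 0| := by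
    apply intervalIntegral.norm_integral_le_of_norm_le_const
    intro t ht
    rw [Set.uIoc_of_le zero_le_one] at ht
    have ht' : t ∈ Set.Icc (0 : ℝ) 1 := ⟨ht.1.le, ht.2⟩
    rw [norm_mul, Complex.norm_real, Real.norm_eq_abs]
    have h3 := hf _ (mix_mem (τ := τ) ht' hx)
    rw [sz_mix] at h3
    have h4 : ‖f (mix τ t x)‖ ≤ C / sz x ^ q := by rw [le_div_iff₀ h2]; linarith
    calc _ ≤ 1 * ‖f (mix τ t x)‖ := by gcongr; exact hw1 t ht'
      _ ≤ _ := by simpa using h4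
  rw [sub_zero, abs_one, mul_one, le_div_iff₀ h2] at this
  linarith

/-- Averaging preserves smoothness and decay. Each derivative splits into two averages
(`pd_avg`), whence the factor `2 ^ N`. -/
lemma Bd.avg {q : ℕ} {N : ℕ} {τ : Equiv.Perm (Fin n)} :
    ∀ {C : ℝ} {w : ℝ → ℝ} (_ : Continuous w) (_ : ∀ t ∈ Set.Icc (0 : ℝ) 1, |w t| ≤ 1)
    {f : (Fin n → ℝ) → ℂ}, Bd q C N f → Bd q (2 ^ N * C) N (avg τ w f) := by
  induction N with
  | zero =>
    intro C w hw hw1 f hf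
    rw [pow_zero, one_mul]
    exact ⟨intervalIntegral.continuous_parametric_intervalIntegral_of_continuous'
      (continuous_avg_integrand hw hf.1) 0 1, avg_bound hw1 hf.2⟩
  | succ N ih =>
    intro C w hw hw1 f hf
    have hC := hf.nonneg
    refine ⟨contDiff_avg hw hf.1, fun x hx => (avg_bound hw1 hf.2.1 x hx).trans ?_, fun l => ?_⟩
    · exact le_mul_of_one_le_left hC (one_le_pow₀ (by norm_num))
    · rw [pd_avg hw hf.1]
      refine Bd.mono (le_of_eq ?_) (Bd.add
        (ih (by fun_prop) (fun t ht => ?_) (hf.2.2 l))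
        (ih (by fun_prop) (fun t ht => ?_) (hf.2.2 (τ⁻¹ l))))
      · ring
      · rw [abs_mul]
        exact mul_le_one₀ (hw1 t ht) (abs_nonneg _) (abs_le.2 ⟨by linarith [ht.1], ht.2⟩)
      · rw [abs_mul]
        exact mul_le_one₀ (hw1 t ht) (abs_nonneg _)
          (abs_le.2 ⟨by linarith [ht.2], by linarith [ht.1]⟩)

/-! ### Test functions and Dunkl operators -/

lemma Bd.anti {q : ℕ} {C : ℝ} {N M : ℕ} (hNM : N ≤ M) {f : (Fin n → ℝ) → ℂ} (h : Bd q C M f) :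
    Bd q C N f := by
  induction hNM with
  | refl => exact h
  | step _ ih => exact ih h.pred

lemma Bd.of_zero {q N : ℕ} : Bd q 0 N (0 : (Fin n → ℝ) → ℂ) := by
  have key : ∀ x ∈ Rplus n, sz x ^ q * ‖(0 : (Fin n → ℝ) → ℂ) x‖ ≤ 0 := by simp
  induction N with
  | zero => exact ⟨continuous_const, key⟩
  | succ N ih =>
    refine ⟨contDiff_const, key, fun l => ?_⟩
    have : pd l (0 : (Fin n → ℝ) → ℂ) = 0 := by ext x; simp [pd]
    rw [this]; exact ih

variable (n) in
/-- The space of test functions: smooth functions on `ℝⁿ` all of whose partial derivatives decay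
rapidly on the orthant. Unlike the Schwartz space, it makes no requirement outside the orthant, so
that preservation under difference quotients has to be checked on the orthant only. -/
def W : Submodule ℂ ((Fin n → ℝ) → ℂ) where
  carrier := {f | ∀ N q, ∃ C, Bd q C N f}
  add_mem' hf hg N q := by
    obtain ⟨C, hC⟩ := hf N q
    obtain ⟨C', hC'⟩ := hg N q
    exact ⟨_, hC.add hC'⟩
  zero_mem' N q := ⟨0, Bd.of_zero⟩
  smul_mem' c f hf N q := by
    obtain ⟨C, hC⟩ := hf N q
    exact ⟨_, hC.smul c⟩

lemma W.contDiff (f : W n) : ContDiff ℝ 1 (f : (Fin n → ℝ) → ℂ) := by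
  obtain ⟨C, hC⟩ := f.2 1 0
  exact hC.1

/-- The partial derivative as an operator on `W n`. -/
noncomputable def pdW (l : Fin n) : W n →ₗ[ℂ] W n where
  toFun f := ⟨pd l f, fun N q => by
    obtain ⟨C, hC⟩ := f.2 (N + 1) q
    exact ⟨C, hC.2.2 l⟩⟩
  map_add' f g := Subtype.ext (pd_add (W.contDiff f) (W.contDiff g) l)
  map_smul' c f := Subtype.ext (pd_smul (W.contDiff f) c l)

/-- The unweighted segment average `f ↦ ∫₀¹ f(t x + (1 - t) τx) dt` as an operator on `W n`. -/
noncomputable def avgW (τ : Equiv.Perm (Fin n)) : W n →ₗ[ℂ] W n where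
  toFun f := ⟨avg τ (fun _ => 1) f, fun N q => by
    obtain ⟨C, hC⟩ := f.2 N q
    exact ⟨_, hC.avg continuous_const (by simp)⟩⟩
  map_add' f g := Subtype.ext
    (avg_add continuous_const (W.contDiff f).continuous (W.contDiff g).continuous)
  map_smul' c f := Subtype.ext (avg_smul c _)

/-- The difference quotient `(f - f ∘ σ) / (x_m - x_j)`, with `σ` the transposition of `m` and `j`,
encoded as the average of `∂_m f - ∂_j f` over the segment from `σx` to `x`, so that it is smooth
across the hyperplane `x_m = x_j`; see `quot_spec`. -/
noncomputable def quot (m j : Fin n) : W n →ₗ[ℂ] W n :=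
  avgW (Equiv.swap m j) ∘ₗ (pdW m - pdW j)

/-- The Dunkl operator `f ↦ ∂_m f + k ∑_{j ≠ m} (f - f ∘ σ_{mj}) / (x_m - x_j)`. The sum may run
over all `j`, because `quot m m = 0`. -/
noncomputable def dunkl (k : ℝ) (m : Fin n) : W n →ₗ[ℂ] W n :=
  pdW m + (k : ℂ) • ∑ j, quot m j

lemma quot_spec (m j : Fin n) (f : W n) (x : Fin n → ℝ) :
    ((x m - x j : ℝ) : ℂ) * (quot m j f : (Fin n → ℝ) → ℂ) x =
      (f : (Fin n → ℝ) → ℂ) x - (f : (Fin n → ℝ) → ℂ) (perm (Equiv.swap m j) x) := by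
  set g : (Fin n → ℝ) → ℂ := f.1 with hg
  have hf : ContDiff ℝ 1 g := W.contDiff f
  have hfd : Continuous (fderiv ℝ g) := hf.continuous_fderiv one_ne_zero
  have hm := continuous_mix (Equiv.swap m j)
  have hdir : x - perm (Equiv.swap m j) x =
      (x m - x j) • (Pi.single m 1 - Pi.single j 1 : Fin n → ℝ) := by
    ext l
    simp only [Pi.sub_apply, perm_apply, Pi.smul_apply, Pi.single_apply, smul_eq_mul,
      Equiv.swap_apply_def]
    split_ifs <;> simp_all
  have hd : ∀ t : ℝ, HasDerivAt (fun t => g (mix (Equiv.swap m j) t x))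
      (((x m - x j : ℝ) : ℂ) * (pd m g - pd j g) (mix (Equiv.swap m j) t x)) t := by
    intro t
    have h1 : HasDerivAt (fun t => mix (Equiv.swap m j) t x)
        (x - perm (Equiv.swap m j) x) t := by
      have h2 := ((hasDerivAt_id t).smul_const x).add
        (((hasDerivAt_id t).const_sub 1).smul_const (perm (Equiv.swap m j) x))
      convert! h2 using 1
      module
    have h3 := (hf.differentiable one_ne_zero (mix (Equiv.swap m j) t x)).hasFDerivAt.comp_hasDerivAt
      t h1
    convert! h3 using 1
    rw [hdir, map_smul, map_sub, Complex.real_smul]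
    rfl
  have hp : ∀ l, Continuous (pd l g) := fun l => by unfold pd; fun_prop
  have hcont : Continuous fun t : ℝ =>
      ((x m - x j : ℝ) : ℂ) * (pd m g - pd j g) (mix (Equiv.swap m j) t x) := by
    have h1 : Continuous fun t : ℝ => mix (Equiv.swap m j) t x := by fun_prop
    exact continuous_const.mul (((hp m).sub (hp j)).comp h1)
  have := intervalIntegral.integral_eq_sub_of_hasDerivAt (fun t _ => hd t)
    (hcont.intervalIntegrable 0 1)
  rw [intervalIntegral.integral_const_mul] at this
  simp only [mix_apply, one_smul, sub_self, zero_smul, add_zero, sub_zero, zero_add] at this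
  rw [← this]
  congr 1
  simp [quot, avgW, pdW, avg, hg, mix_apply]

/-- A linear operator on `W n` is tame if every bound on the output of the form `Bd q _ N` follows
from a bound `Bd q _ M` on the input, linearly in the constant. -/
def Tame (T : W n →ₗ[ℂ] W n) : Prop :=
  ∀ N q, ∃ M, ∃ c, ∀ (f : W n) (C : ℝ),
    Bd q C M (f : (Fin n → ℝ) → ℂ) → Bd q (c * C) N (T f : (Fin n → ℝ) → ℂ)

lemma Tame.add {T U : W n →ₗ[ℂ] W n} (hT : Tame T) (hU : Tame U) : Tame (T + U) := by
  intro N q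
  obtain ⟨M, c, h⟩ := hT N q
  obtain ⟨M', c', h'⟩ := hU N q
  refine ⟨max M M', c + c', fun f C hf => ?_⟩
  rw [add_mul]
  exact (h f C (hf.anti (le_max_left _ _))).add (h' f C (hf.anti (le_max_right _ _)))

lemma Tame.smul {T : W n →ₗ[ℂ] W n} (a : ℂ) (hT : Tame T) : Tame (a • T) := by
  intro N q
  obtain ⟨M, c, h⟩ := hT N q
  refine ⟨M, ‖a‖ * c, fun f C hf => ?_⟩
  rw [mul_assoc]
  exact (h f C hf).smul a

lemma Tame.comp {T U : W n →ₗ[ℂ] W n} (hT : Tame T) (hU : Tame U) : Tame (T ∘ₗ U) := by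
  intro N q
  obtain ⟨M, c, h⟩ := hT N q
  obtain ⟨M', c', h'⟩ := hU M q
  refine ⟨M', c * c', fun f C hf => ?_⟩
  rw [mul_assoc]
  exact h _ _ (h' f C hf)

lemma Tame.id : Tame (LinearMap.id : W n →ₗ[ℂ] W n) := fun N q =>
  ⟨N, 1, fun f C hf => by simpa using hf⟩

lemma Tame.sum {ι : Type*} (s : Finset ι) {T : ι → (W n →ₗ[ℂ] W n)} (hT : ∀ i, Tame (T i)) :
    Tame (∑ i ∈ s, T i) := by
  classical
  induction s using Finset.induction_on with
  | empty => exact fun N q => ⟨0, 0, fun f C hf => by simpa using Bd.of_zero⟩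
  | insert a s ha ih => rw [Finset.sum_insert ha]; exact (hT a).add ih

lemma tame_pdW (l : Fin n) : Tame (pdW l) := fun N q =>
  ⟨N + 1, 1, fun f C hf => by rw [one_mul]; exact hf.2.2 l⟩

lemma tame_avgW (τ : Equiv.Perm (Fin n)) : Tame (avgW τ) := fun N q =>
  ⟨N, 2 ^ N, fun f C hf => hf.avg continuous_const (by simp)⟩

lemma tame_dunkl (k : ℝ) (m : Fin n) : Tame (dunkl k m) := by
  refine (tame_pdW m).add (Tame.smul _ (Tame.sum _ fun j => (tame_avgW _).comp ?_))
  have h : pdW m - pdW j = pdW m + (-1 : ℂ) • pdW j := by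
    ext f; simp [sub_eq_add_neg]
  rw [h]
  exact (tame_pdW m).add ((tame_pdW j).smul _)

open scoped LineDeriv in
lemma pd_schwartz (l : Fin n) (φ : SchwartzMap (Fin n → ℝ) ℂ) :
    pd l φ = ⇑(LineDeriv.lineDerivOpCLM ℂ (SchwartzMap (Fin n → ℝ) ℂ) (Pi.single l 1 : Fin n → ℝ) φ) := by
  ext x
  exact (SchwartzMap.lineDerivOp_apply_eq_fderiv _ _ _).symm

lemma sz_le {x : Fin n → ℝ} : sz x ≤ (n + 1) * (1 + ‖x‖) := by
  have : ∑ l, x l ≤ ∑ l : Fin n, ‖x‖ :=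
    Finset.sum_le_sum fun l _ => (le_abs_self _).trans (norm_le_pi_norm x l)
  simp at this
  unfold sz
  nlinarith [norm_nonneg x, (Nat.cast_nonneg n : (0 : ℝ) ≤ n)]

/-- The bounds `Bd q _ N` are controlled by continuous seminorms on the Schwartz space. -/
lemma exists_seminorm (q N : ℕ) : ∃ p : Seminorm ℂ (SchwartzMap (Fin n → ℝ) ℂ),
    Continuous p ∧ ∀ φ, Bd q (p φ) N (φ : (Fin n → ℝ) → ℂ) := by
  have base : ∃ p : Seminorm ℂ (SchwartzMap (Fin n → ℝ) ℂ),
    Continuous p ∧ ∀ φ, ∀ x ∈ Rplus n, sz x ^ q * ‖φ x‖ ≤ p φ := by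
    set p₀ := (Finset.Iic (q, 0)).sup (fun m => SchwartzMap.seminorm ℂ (E := Fin n → ℝ) (F := ℂ) m.1 m.2)
    have hp₀ : Continuous p₀ :=
      Seminorm.continuous_finsetSup fun i _ =>
        (schwartz_withSeminorms ℂ (Fin n → ℝ) ℂ).continuous_seminorm i
    refine ⟨(((n + 1 : ℝ) ^ q * 2 ^ q).toNNReal) • p₀, ?_, fun φ x hx => ?_⟩
    · change Continuous fun φ => (((n + 1 : ℝ) ^ q * 2 ^ q).toNNReal) • p₀ φ
      exact continuous_const.smul hp₀
    · have h := SchwartzMap.one_add_le_sup_seminorm_apply (𝕜 := ℂ) (m := (q, 0)) (k := q) (n := 0)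
        le_rfl le_rfl φ x
      rw [norm_iteratedFDeriv_zero] at h
      have h1 := one_le_sz hx
      change _ ≤ ((((n + 1 : ℝ) ^ q * 2 ^ q).toNNReal : NNReal) : ℝ) * p₀ φ
      rw [Real.coe_toNNReal _ (by positivity)]
      calc sz x ^ q * ‖φ x‖ ≤ ((n + 1) * (1 + ‖x‖)) ^ q * ‖φ x‖ := by
            gcongr; exact sz_le
        _ = (n + 1) ^ q * ((1 + ‖x‖) ^ q * ‖φ x‖) := by rw [mul_pow]; ring
        _ ≤ (n + 1) ^ q * (2 ^ q * p₀ φ) := by gcongr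
        _ = _ := by ring
  obtain ⟨p₀, hp₀, hb⟩ := base
  induction N with
  | zero => exact ⟨p₀, hp₀, fun φ => ⟨φ.continuous, hb φ⟩⟩
  | succ N ih =>
    obtain ⟨p, hp, h⟩ := ih
    let D := fun l : Fin n =>
      LineDeriv.lineDerivOpCLM ℂ (SchwartzMap (Fin n → ℝ) ℂ) (Pi.single l 1 : Fin n → ℝ)
    let r : Seminorm ℂ (SchwartzMap (Fin n → ℝ) ℂ) := ∑ l, p.comp (D l).toLinearMap
    have hr : ∀ φ, r φ = ∑ l, p (D l φ) := fun φ => by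
      simp [r]
    refine ⟨p₀ + r, ?_, fun φ => ⟨φ.smooth 1, fun x hx => ?_, fun l => ?_⟩⟩
    · change Continuous fun φ => p₀ φ + r φ
      simp_rw [hr]
      exact hp₀.add (continuous_finsetSum _ fun l _ => hp.comp (D l).continuous)
    · exact (hb φ x hx).trans (le_add_of_nonneg_right (apply_nonneg r φ))
    · rw [pd_schwartz]
      refine (h _).mono ?_
      have h1 : p (D l φ) ≤ r φ := by
        rw [hr]
        exact Finset.single_le_sum (f := fun l => p (D l φ)) (fun l _ => apply_nonneg p _)
          (Finset.mem_univ l)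
      exact h1.trans (le_add_of_nonneg_left (apply_nonneg p₀ φ))

/-- The inclusion of the Schwartz space into `W n`. -/
noncomputable def ofSchwartz : SchwartzMap (Fin n → ℝ) ℂ →ₗ[ℂ] W n where
  toFun φ := ⟨φ, fun N q => by
    obtain ⟨p, -, h⟩ := exists_seminorm q N
    exact ⟨_, h φ⟩⟩
  map_add' _ _ := rfl
  map_smul' _ _ := rfl

/-- A linear functional on `W n` bounded in terms of finitely many derivatives and decay rates, that
is, continuous for the natural Fréchet topology; only the restriction to Schwartz functions is
needed (`BdFun.continuous`), so that topology is never introduced. -/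
def BdFun (L : W n →ₗ[ℂ] ℂ) : Prop :=
  ∃ N q K, ∀ (f : W n) (C : ℝ), Bd q C N (f : (Fin n → ℝ) → ℂ) → ‖L f‖ ≤ K * C

lemma BdFun.comp {L : W n →ₗ[ℂ] ℂ} (hL : BdFun L) {T : W n →ₗ[ℂ] W n} (hT : Tame T) :
    BdFun (L ∘ₗ T) := by
  obtain ⟨N, q, K, h⟩ := hL
  obtain ⟨M, c, h'⟩ := hT N q
  exact ⟨M, q, K * c, fun f C hf => by rw [mul_assoc]; exact h _ _ (h' f C hf)⟩

lemma BdFun.continuous {L : W n →ₗ[ℂ] ℂ} (hL : BdFun L) : Continuous (L ∘ₗ ofSchwartz) := by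
  obtain ⟨N, q, K, h⟩ := hL
  obtain ⟨p, hp, hb⟩ := exists_seminorm (n := n) q N
  refine continuous_of_continuousAt_zero (L ∘ₗ ofSchwartz) ?_
  rw [ContinuousAt, map_zero]
  have h0 : Filter.Tendsto (fun φ => K * p φ) (nhds 0) (nhds 0) := by
    have h1 : Continuous fun φ => K * p φ := by fun_prop
    have h2 := h1.tendsto 0
    rwa [map_zero, mul_zero] at h2
  exact squeeze_zero_norm (fun φ => h _ _ (hb φ)) h0

/-! ### Complex powers on the orthant and integrability -/

/-- The function `x_+^s`: the principal power `x ^ s` for `x > 0`, and `0` for `x ≤ 0`. -/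
noncomputable def hp (s : ℂ) (x : ℝ) : ℂ := if 0 < x then (x : ℂ) ^ s else 0

lemma hp_of_pos {x : ℝ} (hx : 0 < x) (s : ℂ) : hp s x = (x : ℂ) ^ s := if_pos hx

lemma hp_of_nonpos {x : ℝ} (hx : x ≤ 0) (s : ℂ) : hp s x = 0 := if_neg hx.not_gt

lemma hp_add_one (s : ℂ) (x : ℝ) : hp (s + 1) x = x * hp s x := by
  rcases lt_or_ge 0 x with h | h
  · rw [hp_of_pos h, hp_of_pos h, Complex.cpow_add _ _ (by exact_mod_cast h.ne'), Complex.cpow_one,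
      mul_comm]
  · rw [hp_of_nonpos h, hp_of_nonpos h, mul_zero]

lemma norm_hp_of_pos {x : ℝ} (hx : 0 < x) (s : ℂ) : ‖hp s x‖ = x ^ s.re := by
  rw [hp_of_pos hx, Complex.norm_cpow_eq_rpow_re_of_pos hx]

lemma measurable_hp (s : ℂ) : Measurable (hp s) := by
  unfold hp
  exact Measurable.ite measurableSet_Ioi (by fun_prop) measurable_const

/-- For `Re s > 1` the function `x_+^s` is differentiable also at `0`; this makes integration by
parts over the whole space free of boundary terms. -/
lemma hasDerivAt_hp {s : ℂ} (hs : 1 < s.re) (x : ℝ) : HasDerivAt (hp s) (s * hp (s - 1) x) x := by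
  rcases lt_trichotomy x 0 with h | h | h
  · rw [hp_of_nonpos h.le, mul_zero]
    refine (hasDerivAt_const x (0 : ℂ)).congr_of_eventuallyEq ?_
    filter_upwards [Iio_mem_nhds h] with y hy
    exact hp_of_nonpos (le_of_lt hy) s
  · subst h
    rw [hp_of_nonpos le_rfl, mul_zero, hasDerivAt_iff_isLittleO_nhds_zero]
    simp only [zero_add, hp_of_nonpos le_rfl, smul_zero, sub_zero]
    rw [Asymptotics.isLittleO_iff]
    intro c hc
    have h1 : Filter.Tendsto (fun y : ℝ => |y| ^ (s.re - 1)) (nhds 0) (nhds 0) := by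
      have : ContinuousAt (fun y : ℝ => |y| ^ (s.re - 1)) 0 :=
        continuousAt_id.abs.rpow_const (Or.inr (by linarith))
      have h2 := this.tendsto
      simpa [Real.zero_rpow (by linarith : s.re - 1 ≠ 0)] using h2
    filter_upwards [h1.eventually (gt_mem_nhds hc)] with y hy
    rcases lt_or_ge 0 y with h | h
    · rw [norm_hp_of_pos h, Real.norm_eq_abs, abs_of_pos h]
      rw [abs_of_pos h] at hy
      calc y ^ s.re = y ^ (s.re - 1) * y := by
            rw [← Real.rpow_add_one h.ne']; ring_nf
        _ ≤ c * y := by gcongr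
    · rw [hp_of_nonpos h, norm_zero]; positivity
  · have h1 : HasDerivAt (fun y : ℝ => (y : ℂ) ^ s) (s * (x : ℂ) ^ (s - 1) * 1) x := by
      have h2 : HasDerivAt (fun z : ℂ => z ^ s) (s * (x : ℂ) ^ (s - 1) * 1) (x : ℂ) :=
        (hasDerivAt_id (x : ℂ)).cpow_const (Or.inl (by simpa using h))
      exact h2.comp_ofReal
    rw [hp_of_pos h, ← mul_one (s * _)]
    refine h1.congr_of_eventuallyEq ?_
    filter_upwards [Ioi_mem_nhds h] with y hy
    exact hp_of_pos hy s

/-- The monomial `∏_l (x_l)_+^{s_l}` with complex multi-exponent `s`, supported on the orthant. -/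
noncomputable def pw (s : Fin n → ℂ) (x : Fin n → ℝ) : ℂ := ∏ l, hp (s l) (x l)

lemma measurable_pw (s : Fin n → ℂ) : Measurable (pw s) := by
  unfold pw
  exact Finset.measurable_fun_prod _ fun l _ => (measurable_hp _).comp (measurable_pi_apply l)

lemma pw_of_notMem {x : Fin n → ℝ} (hx : x ∉ Rplus n) (s : Fin n → ℂ) : pw s x = 0 := by
  simp only [Rplus, Set.mem_ofPred_eq, not_forall, not_lt] at hx
  obtain ⟨l, hl⟩ := hx
  exact Finset.prod_eq_zero (Finset.mem_univ l) (hp_of_nonpos hl _)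

lemma pw_add_single (s : Fin n → ℂ) (m : Fin n) (x : Fin n → ℝ) :
    pw (s + Pi.single m 1) x = x m * pw s x := by
  have : ∀ l, hp ((s + Pi.single m 1 : Fin n → ℂ) l) (x l) =
      (if l = m then (x l : ℂ) else 1) * hp (s l) (x l) := by
    intro l
    by_cases h : l = m
    · subst h; simp [hp_add_one]
    · simp [h]
  simp only [pw, this, Finset.prod_mul_distrib, Finset.prod_ite_eq', Finset.mem_univ, if_true]

lemma pw_perm (s : Fin n → ℂ) (m j : Fin n) (x : Fin n → ℝ) :
    pw s (perm (Equiv.swap m j) x) = pw (s ∘ Equiv.swap m j) x := by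
  unfold pw
  rw [← Equiv.prod_comp (Equiv.swap m j)]
  simp

/-- A one-variable function dominating `x_+^s (1 + x)^{-Q}` for all `s` with `a ≤ Re s ≤ b`. -/
noncomputable def dom1 (a b : ℝ) (Q : ℕ) (x : ℝ) : ℝ :=
  if 0 < x then (x ^ a + x ^ b) / (1 + x) ^ Q else 0

lemma dom1_nonneg (a b : ℝ) (Q : ℕ) (x : ℝ) : 0 ≤ dom1 a b Q x := by
  unfold dom1; split_ifs with h <;> positivity

lemma integrableOn_rpow_div {a : ℝ} (ha : -1 < a) {Q : ℕ} (hQ : a + 1 < Q) :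
    IntegrableOn (fun x : ℝ => x ^ a / (1 + x) ^ Q) (Set.Ioi 0) := by
  have hm : AEStronglyMeasurable (fun x : ℝ => x ^ a / (1 + x) ^ Q) :=
    Measurable.aestronglyMeasurable (by fun_prop)
  rw [← Set.Ioc_union_Ioi_eq_Ioi zero_le_one]
  refine IntegrableOn.union ?_ ?_
  · have h1 : IntegrableOn (fun x : ℝ => x ^ a) (Set.Ioc 0 1) := by
      have := intervalIntegral.intervalIntegrable_rpow' (a := 0) (b := 1) ha
      rwa [intervalIntegrable_iff_integrableOn_Ioc_of_le zero_le_one] at this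
    refine Integrable.mono' h1 hm.restrict ?_
    filter_upwards [ae_restrict_mem measurableSet_Ioc] with x hx
    have h0 := hx.1
    rw [Real.norm_of_nonneg (by positivity)]
    exact div_le_self (by positivity) (one_le_pow₀ (by linarith))
  · have h1 : IntegrableOn (fun x : ℝ => x ^ (a - Q)) (Set.Ioi 1) :=
      integrableOn_Ioi_rpow_of_lt (by linarith) one_pos
    refine Integrable.mono' h1 hm.restrict ?_
    filter_upwards [ae_restrict_mem measurableSet_Ioi] with x hx
    have h0 : 0 < x := one_pos.trans hx
    rw [Real.norm_of_nonneg (by positivity), Real.rpow_sub h0, Real.rpow_natCast]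
    gcongr
    linarith

lemma integrable_dom1 {a b : ℝ} (ha : -1 < a) (hb : -1 < b) {Q : ℕ} (hQa : a + 1 < Q)
    (hQb : b + 1 < Q) : Integrable (dom1 a b Q) := by
  have h := (integrableOn_rpow_div ha hQa).add (integrableOn_rpow_div hb hQb)
  have : dom1 a b Q = Set.indicator (Set.Ioi 0)
      ((fun x : ℝ => x ^ a / (1 + x) ^ Q) + fun x : ℝ => x ^ b / (1 + x) ^ Q) := by
    ext x
    simp [dom1, Set.indicator_apply, add_div]
  rw [this, integrable_indicator_iff measurableSet_Ioi]
  exact h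

/-- The product of the one-variable dominating functions `dom1`. -/
noncomputable def dom (a b : ℝ) (Q : ℕ) (x : Fin n → ℝ) : ℝ := ∏ l, dom1 a b Q (x l)

lemma integrable_dom {a b : ℝ} (ha : -1 < a) (hb : -1 < b) {Q : ℕ} (hQa : a + 1 < Q)
    (hQb : b + 1 < Q) : Integrable (dom (n := n) a b Q) :=
  Integrable.fintype_prod fun _ => integrable_dom1 ha hb hQa hQb

lemma dom_nonneg (a b : ℝ) (Q : ℕ) (x : Fin n → ℝ) : 0 ≤ dom a b Q x :=
  Finset.prod_nonneg fun _ _ => dom1_nonneg _ _ _ _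

lemma rpow_le_add {x a b c : ℝ} (hx : 0 < x) (hac : a ≤ c) (hcb : c ≤ b) :
    x ^ c ≤ x ^ a + x ^ b := by
  rcases le_total x 1 with h | h
  · exact (Real.rpow_le_rpow_of_exponent_ge hx h hac).trans (le_add_of_nonneg_right (by positivity))
  · exact (Real.rpow_le_rpow_of_exponent_le h hcb).trans (le_add_of_nonneg_left (by positivity))

lemma coord_le_sz {x : Fin n → ℝ} (hx : x ∈ Rplus n) (l : Fin n) : 1 + x l ≤ sz x := by
  have := Finset.single_le_sum (f := x) (fun i _ => (hx i).le) (Finset.mem_univ l)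
  unfold sz; linarith

/-- Pointwise domination of the integrand `f · pw s · w`, uniform in `s` with real parts in `[a, b]`
and in the weight `w`. -/
lemma norm_le_dom {a b : ℝ} {Q M : ℕ} {s : Fin n → ℂ} (hs : ∀ l, a ≤ (s l).re ∧ (s l).re ≤ b)
    {f w : (Fin n → ℝ) → ℂ} {C D : ℝ} (hf : ∀ x ∈ Rplus n, sz x ^ (M + n * Q) * ‖f x‖ ≤ C)
    (hw : ∀ x ∈ Rplus n, ‖w x‖ ≤ D * sz x ^ M) (x : Fin n → ℝ) :
    ‖f x * pw s x * w x‖ ≤ C * D * dom a b Q x := by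
  by_cases hx : x ∈ Rplus n
  · have h1 := one_le_sz hx
    have hD : 0 ≤ D := by
      by_contra! h
      have := (norm_nonneg _).trans (hw x hx)
      have : 0 < sz x ^ M := by positivity
      nlinarith
    have hpw : ‖pw s x‖ ≤ dom a b Q x * sz x ^ (n * Q) := by
      have : sz x ^ (n * Q) = ∏ _l : Fin n, sz x ^ Q := by
        simp [Finset.prod_const, pow_mul']
      rw [this, pw, norm_prod, dom, ← Finset.prod_mul_distrib]
      refine Finset.prod_le_prod (fun _ _ => norm_nonneg _) fun l _ => ?_
      have hl := hx l
      have hl' := coord_le_sz hx l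
      rw [norm_hp_of_pos hl, dom1, if_pos hl]
      calc x l ^ (s l).re ≤ x l ^ a + x l ^ b := rpow_le_add hl (hs l).1 (hs l).2
        _ = (x l ^ a + x l ^ b) / (1 + x l) ^ Q * (1 + x l) ^ Q := by field_simp
        _ ≤ _ := by gcongr
    have h0 := dom_nonneg a b Q x
    calc ‖f x * pw s x * w x‖ = ‖f x‖ * ‖pw s x‖ * ‖w x‖ := by rw [norm_mul, norm_mul]
      _ ≤ ‖f x‖ * (dom a b Q x * sz x ^ (n * Q)) * (D * sz x ^ M) := by
          gcongr; exact hw x hx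
      _ = (sz x ^ (M + n * Q) * ‖f x‖) * (D * dom a b Q x) := by rw [pow_add]; ring
      _ ≤ C * (D * dom a b Q x) := by
          gcongr; exact hf x hx
      _ = _ := by ring
  · have : dom a b Q x = 0 := by
      simp only [Rplus, Set.mem_ofPred_eq, not_forall, not_lt] at hx
      obtain ⟨l, hl⟩ := hx
      exact Finset.prod_eq_zero (Finset.mem_univ l) (if_neg hl.not_gt)
    rw [pw_of_notMem hx, this]; simp

lemma aesm_integrand {f w : (Fin n → ℝ) → ℂ} (s : Fin n → ℂ) (hf : Continuous f)
    (hw : Measurable w) : AEStronglyMeasurable (fun x => f x * pw s x * w x) :=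
  ((hf.measurable.mul (measurable_pw s)).mul hw).aestronglyMeasurable

/-- Measurable weights of polynomial growth on the orthant. -/
def PolyBd (w : (Fin n → ℝ) → ℂ) : Prop :=
  Measurable w ∧ ∃ D, ∃ M : ℕ, ∀ x ∈ Rplus n, ‖w x‖ ≤ D * sz x ^ M

lemma exists_gt (b : ℝ) : ∃ Q : ℕ, b + 1 < Q := exists_nat_gt _

lemma exists_re_bounds (s : Fin n → ℂ) (hs : ∀ l, -1 < (s l).re) :
    ∃ a b : ℝ, -1 < a ∧ a ≤ b ∧ ∀ l, a ≤ (s l).re ∧ (s l).re ≤ b := by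
  obtain ⟨a, ha, h⟩ : ∃ a : ℝ, -1 < a ∧ ∀ l ∈ (Finset.univ : Finset (Fin n)), a ≤ (s l).re := by
    induction (Finset.univ : Finset (Fin n)) using Finset.induction_on with
    | empty => exact ⟨0, by norm_num, by simp⟩
    | insert i t hi ih =>
      obtain ⟨a, ha, h⟩ := ih
      refine ⟨min a (s i).re, lt_min ha (hs i), fun l hl => ?_⟩
      rcases Finset.mem_insert.1 hl with rfl | hl
      · exact min_le_right _ _
      · exact (min_le_left _ _).trans (h l hl)
  refine ⟨a, max a (∑ l, |(s l).re|), ha, le_max_left _ _, fun l => ⟨h l (Finset.mem_univ l), ?_⟩⟩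
  refine le_trans ?_ (le_max_right _ _)
  exact (le_abs_self _).trans
    (Finset.single_le_sum (f := fun l => |(s l).re|) (fun _ _ => abs_nonneg _) (Finset.mem_univ l))

/-- The dominating function does not depend on `w`, only on its polynomial bound. -/
lemma exists_dom {f : (Fin n → ℝ) → ℂ} (hf : f ∈ W n) {s : Fin n → ℂ} (hs : ∀ l, -1 < (s l).re)
    (D : ℝ) (M : ℕ) : ∃ g : (Fin n → ℝ) → ℝ, Integrable g ∧
      ∀ w : (Fin n → ℝ) → ℂ, (∀ x ∈ Rplus n, ‖w x‖ ≤ D * sz x ^ M) →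
        ∀ x, ‖f x * pw s x * w x‖ ≤ g x := by
  obtain ⟨a, b, ha, hab, h⟩ := exists_re_bounds s hs
  obtain ⟨Q, hQ⟩ := exists_gt b
  obtain ⟨C, hC⟩ := hf 0 (M + n * Q)
  exact ⟨_, (integrable_dom ha (ha.trans_le hab) (by linarith) hQ).const_mul (C * D),
    fun w hw => norm_le_dom h hC.2 hw⟩

lemma integrable_pw {f w : (Fin n → ℝ) → ℂ} (hf : f ∈ W n) {s : Fin n → ℂ}
    (hs : ∀ l, -1 < (s l).re) (hw : PolyBd w) : Integrable fun x => f x * pw s x * w x := by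
  obtain ⟨hwm, D, M, hD⟩ := hw
  obtain ⟨g, hg, h⟩ := exists_dom hf hs D M
  exact hg.mono' (aesm_integrand s (W.contDiff ⟨f, hf⟩).continuous hwm)
    (Filter.Eventually.of_forall (h w hD))

/-- Holomorphy of an integral depending locally boundedly on a complex parameter. Cauchy estimates
on a smaller disc dominate the derivative of the integrand. -/
lemma differentiableAt_integral {α : Type*} [MeasurableSpace α] {ν : Measure α}
    {F : ℂ → α → ℂ} {z₀ : ℂ} {r : ℝ} (hr : 0 < r) {g : α → ℝ}
    (hm : ∀ z ∈ Metric.ball z₀ r, AEStronglyMeasurable (F z) ν) (hg : Integrable g ν)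
    (hb : ∀ a, ∀ z ∈ Metric.ball z₀ r, ‖F z a‖ ≤ g a)
    (hd : ∀ a, DifferentiableOn ℂ (fun z => F z a) (Metric.ball z₀ r)) :
    DifferentiableAt ℂ (fun z => ∫ a, F z a ∂ν) z₀ := by
  have hz₀ : z₀ ∈ Metric.ball z₀ r := Metric.mem_ball_self hr
  have hda : ∀ a, ∀ z ∈ Metric.ball z₀ r, HasDerivAt (fun z => F z a) (deriv (fun z => F z a) z) z :=
    fun a z hz => ((hd a).differentiableAt (Metric.isOpen_ball.mem_nhds hz)).hasDerivAt
  refine (hasDerivAt_integral_of_dominated_loc_of_deriv_le (s := Metric.ball z₀ (r / 3))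
    (F' := fun z a => deriv (fun z => F z a) z) (bound := fun a => g a / (r / 3))
    (Metric.ball_mem_nhds _ (by positivity)) ?_ ?_ ?_ ?_ ?_ ?_).2.differentiableAt
  · filter_upwards [Metric.ball_mem_nhds z₀ hr] with z hz using hm z hz
  · exact hg.mono' (hm z₀ hz₀) (Filter.Eventually.of_forall fun a => hb a _ hz₀)
  -- The derivative of the integrand at `z₀` is measurable as a limit of difference quotients along
  -- the sequence `u`.
  · let u : ℕ → ℂ := fun N => ((r / 2) / (N + 1) : ℝ)
    have hu0 : ∀ N, u N ≠ 0 := fun N => by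
      simp only [u, ne_eq, Complex.ofReal_eq_zero]; positivity
    have hu : Filter.Tendsto u Filter.atTop (nhds 0) := by
      have h1 : Filter.Tendsto (fun N : ℕ => (r / 2) / ((N : ℝ) + 1)) Filter.atTop (nhds 0) :=
        tendsto_const_nhds.div_atTop
          (Filter.tendsto_atTop_add_const_right _ _ tendsto_natCast_atTop_atTop)
      have h2 := (Complex.continuous_ofReal.tendsto 0).comp h1
      rwa [Complex.ofReal_zero] at h2
    have hub : ∀ N, z₀ + u N ∈ Metric.ball z₀ r := fun N => by
      rw [Metric.mem_ball, dist_eq_norm, add_sub_cancel_left, Complex.norm_real,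
        Real.norm_of_nonneg (by positivity)]
      have : (r / 2) / ((N : ℝ) + 1) ≤ r / 2 := div_le_self (by positivity) (by simp)
      linarith
    refine aestronglyMeasurable_of_tendsto_ae Filter.atTop
      (f := fun N a => (u N)⁻¹ • (F (z₀ + u N) a - F z₀ a)) (fun N => ?_) ?_
    · exact ((hm _ (hub N)).sub (hm _ hz₀)).const_smul (u N)⁻¹
    · refine Filter.Eventually.of_forall fun a => ?_
      have := (hasDerivAt_iff_tendsto_slope_zero.1 (hda a z₀ hz₀))
      exact this.comp (tendsto_nhdsWithin_iff.2 ⟨hu, Filter.Eventually.of_forall hu0⟩)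
  · refine Filter.Eventually.of_forall fun a z hz => ?_
    have hsub : Metric.closedBall z (r / 3) ⊆ Metric.ball z₀ r := by
      apply Metric.closedBall_subset_ball'
      have := Metric.mem_ball.1 hz
      linarith
    refine Complex.norm_deriv_le_of_forall_mem_sphere_norm_le (by positivity) ?_ ?_
    · exact ((hd a).mono hsub).diffContOnCl_ball le_rfl
    · exact fun y hy => hb a y (hsub (Metric.sphere_subset_closedBall hy))
  · exact hg.div_const _
  · exact Filter.Eventually.of_forall fun a z hz =>
      hda a z (Metric.ball_subset_ball (by linarith) hz)

lemma differentiable_pw (x : Fin n → ℝ) : Differentiable ℂ fun z : ℂ => pw (fun _ => z) x := by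
  by_cases hx : x ∈ Rplus n
  · have : (fun z : ℂ => pw (fun _ => z) x) = fun z => ∏ l, (x l : ℂ) ^ z := by
      ext z
      exact Finset.prod_congr rfl fun l _ => hp_of_pos (hx l) z
    rw [this]
    refine Differentiable.fun_finsetProd fun l _ => ?_
    exact differentiable_id.const_cpow (Or.inl (by exact_mod_cast (hx l).ne'))
  · have : (fun z : ℂ => pw (fun _ => z) x) = fun z => 0 := by
      ext z; exact pw_of_notMem hx _
    rw [this]; exact differentiable_const 0

lemma differentiableAt_integral_pw {f w : (Fin n → ℝ) → ℂ} (hf : f ∈ W n) (hw : PolyBd w)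
    {z₀ : ℂ} (hz₀ : -1 < z₀.re) :
    DifferentiableAt ℂ (fun z => ∫ x, f x * pw (fun _ => z) x * w x) z₀ := by
  obtain ⟨hwm, D, M, hD⟩ := hw
  set r := (z₀.re + 1) / 2 with hr
  have hr0 : 0 < r := by rw [hr]; linarith
  obtain ⟨Q, hQ⟩ := exists_gt (z₀.re + r)
  obtain ⟨C, hC⟩ := hf 0 (M + n * Q)
  refine differentiableAt_integral (r := r) hr0 (g := fun x => C * D * dom (z₀.re - r) (z₀.re + r) Q x)
    (fun z _ => aesm_integrand _ hC.1 hwm) ?_ ?_ ?_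
  · exact (integrable_dom (by linarith) (by linarith) (by linarith) hQ).const_mul _
  · intro x z hz
    refine norm_le_dom (fun _ => ?_) hC.2 hD x
    have h1 := (Complex.abs_re_le_norm (z - z₀)).trans_lt (by simpa [dist_eq_norm] using hz)
    rw [Complex.sub_re, abs_lt] at h1
    constructor <;> linarith
  · exact fun x => (((differentiable_pw x).const_mul _).mul_const _).differentiableOn

lemma exists_integral_bound {w : (Fin n → ℝ) → ℂ} (hw : PolyBd w) {s : Fin n → ℂ}
    (hs : ∀ l, -1 < (s l).re) : ∃ q K, ∀ (f : W n) (C : ℝ),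
      Bd q C 0 (f : (Fin n → ℝ) → ℂ) →
        ‖∫ x, (f : (Fin n → ℝ) → ℂ) x * pw s x * w x‖ ≤ K * C := by
  obtain ⟨a, b, ha, hab, h⟩ := exists_re_bounds s hs
  obtain ⟨hwm, D, M, hD⟩ := hw
  obtain ⟨Q, hQ⟩ := exists_gt b
  refine ⟨M + n * Q, D * ∫ x, dom (n := n) a b Q x, fun f C hC => ?_⟩
  have := norm_integral_le_of_norm_le
    ((integrable_dom (n := n) ha (ha.trans_le hab) (by linarith) hQ).const_mul (C * D))
    (Filter.Eventually.of_forall (norm_le_dom h hC.2 hD))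
  rw [integral_const_mul] at this
  linarith

/-! ### The regularised Dunkl weight -/

/-- The regularised weight `∏_{i ≠ j} ((x_i - x_j)² + ε)^{k/2}` over ordered pairs. At `ε = 0` it is
`ω_k`; for `ε > 0` it is smooth. -/
noncomputable def V (k ε : ℝ) (x : Fin n → ℝ) : ℝ :=
  ∏ i, ∏ j, if i = j then 1 else ((x i - x j) ^ 2 + ε) ^ (k / 2)

lemma V_nonneg {k ε : ℝ} (hε : 0 ≤ ε) (x : Fin n → ℝ) : 0 ≤ V k ε x :=
  Finset.prod_nonneg fun i _ => Finset.prod_nonneg fun j _ => by split_ifs <;> positivity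

lemma wk_eq_V {k : ℝ} (hk : 0 < k) (x : Fin n → ℝ) : wk n k x = V k 0 x := by
  have h1 : ∀ u : ℝ, (u ^ 2 + 0) ^ (k / 2) = |u| ^ k := by
    intro u
    rw [add_zero, ← sq_abs, ← Real.rpow_natCast, ← Real.rpow_mul (abs_nonneg u)]
    congr 1; push_cast; ring
  have h2 := Finset.prod_prod_Ioi_mul_eq_prod_prod_off_diag
    (fun i j : Fin n => |x i - x j| ^ k)
  have h3 : V k 0 x = ∏ i : Fin n, ∏ j ∈ {i}ᶜ, |x j - x i| ^ k := by
    unfold V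
    refine Finset.prod_congr rfl fun i _ => ?_
    rw [← Finset.mul_prod_erase _ _ (Finset.mem_univ i), if_pos rfl, one_mul]
    refine Finset.prod_congr (by ext j; simp) fun j hj => ?_
    have : i ≠ j := by simpa [eq_comm] using hj
    rw [if_neg this, h1, abs_sub_comm]
  rw [h3, ← h2]
  unfold wk
  refine Finset.prod_congr rfl fun i _ => Finset.prod_congr rfl fun j _ => ?_
  rw [abs_sub_comm (x j), ← Real.rpow_add_of_nonneg (abs_nonneg _) hk.le hk.le]
  ring_nf

lemma V_perm (k ε : ℝ) (τ : Equiv.Perm (Fin n)) (x : Fin n → ℝ) :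
    V k ε (perm τ x) = V k ε x := by
  unfold V
  rw [← Equiv.prod_comp τ (fun i => ∏ j, if i = j then 1 else ((x i - x j) ^ 2 + ε) ^ (k / 2))]
  refine Finset.prod_congr rfl fun i _ => ?_
  rw [← Equiv.prod_comp τ (fun j => if τ i = j then 1 else ((x (τ i) - x j) ^ 2 + ε) ^ (k / 2))]
  simp

lemma measurable_V (k ε : ℝ) : Measurable (V (n := n) k ε) := by
  unfold V
  refine Finset.measurable_fun_prod _ fun i _ => Finset.measurable_fun_prod _ fun j _ => ?_
  split_ifs
  · exact measurable_const
  · fun_prop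

lemma abs_sub_le_sz {x : Fin n → ℝ} (hx : x ∈ Rplus n) (i j : Fin n) : |x i - x j| ≤ sz x - 1 := by
  have h1 := coord_le_sz hx i
  have h2 := coord_le_sz hx j
  have h3 := hx i
  have h4 := hx j
  rw [abs_le]; constructor <;> linarith

lemma V_le {k ε : ℝ} (hk : 0 < k) (h0 : 0 ≤ ε) (h1 : ε ≤ 1) {x : Fin n → ℝ} (hx : x ∈ Rplus n) :
    V k ε x ≤ sz x ^ (⌈k⌉₊ * n * n) := by
  have hs := one_le_sz hx
  have : sz x ^ (⌈k⌉₊ * n * n) = ∏ _i : Fin n, ∏ _j : Fin n, sz x ^ ⌈k⌉₊ := by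
    simp [pow_mul]
  rw [this]
  refine Finset.prod_le_prod (fun i _ => Finset.prod_nonneg fun j _ => by split_ifs <;> positivity)
    fun i _ => Finset.prod_le_prod (fun j _ => by split_ifs <;> positivity) fun j _ => ?_
  split_ifs
  · exact one_le_pow₀ hs
  · have h2 := abs_sub_le_sz hx i j
    have h3 : (x i - x j) ^ 2 + ε ≤ sz x ^ 2 := by
      rw [← sq_abs (x i - x j)]
      nlinarith [abs_nonneg (x i - x j)]
    calc ((x i - x j) ^ 2 + ε) ^ (k / 2) ≤ (sz x ^ 2) ^ (k / 2) := by gcongr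
      _ = sz x ^ k := by
        rw [← Real.rpow_natCast, ← Real.rpow_mul (by linarith)]
        congr 1; push_cast; ring
      _ ≤ sz x ^ (⌈k⌉₊ : ℝ) := Real.rpow_le_rpow_of_exponent_le hs (Nat.le_ceil k)
      _ = _ := Real.rpow_natCast _ _

lemma norm_V_le {k ε : ℝ} (hk : 0 < k) (h0 : 0 ≤ ε) (h1 : ε ≤ 1) {x : Fin n → ℝ}
    (hx : x ∈ Rplus n) : ‖(V k ε x : ℂ)‖ ≤ 1 * sz x ^ (⌈k⌉₊ * n * n) := by
  rw [Complex.norm_real, Real.norm_of_nonneg (V_nonneg h0 x), one_mul]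
  exact V_le hk h0 h1 hx

lemma polyBd_V {k ε : ℝ} (hk : 0 < k) (h0 : 0 ≤ ε) (h1 : ε ≤ 1) :
    PolyBd (fun x : Fin n → ℝ => (V k ε x : ℂ)) :=
  ⟨Complex.measurable_ofReal.comp (measurable_V k ε), 1, _, fun _ hx => norm_V_le hk h0 h1 hx⟩

lemma PolyBd.mul {w v : (Fin n → ℝ) → ℂ} (hw : PolyBd w) (hv : PolyBd v) :
    PolyBd fun x => w x * v x := by
  obtain ⟨hwm, D, M, h⟩ := hw
  obtain ⟨hvm, D', M', h'⟩ := hv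
  refine ⟨hwm.mul hvm, D * D', M + M', fun x hx => ?_⟩
  rw [norm_mul, pow_add]
  calc _ ≤ (D * sz x ^ M) * (D' * sz x ^ M') :=
        mul_le_mul (h x hx) (h' x hx) (norm_nonneg _) ((norm_nonneg _).trans (h x hx))
    _ = _ := by ring

/-- The regularisation `(x_m - x_j) / ((x_m - x_j)² + ε)` of `1 / (x_m - x_j)`. -/
noncomputable def ker (ε : ℝ) (m j : Fin n) (x : Fin n → ℝ) : ℝ :=
  (x m - x j) / ((x m - x j) ^ 2 + ε)

/-- The factor `(x_m - x_j)² / ((x_m - x_j)² + ε) ∈ [0, 1]`, which tends to `1` as `ε → 0` off the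
hyperplane `x_m = x_j`. -/
noncomputable def rat (ε : ℝ) (m j : Fin n) (x : Fin n → ℝ) : ℝ :=
  (x m - x j) ^ 2 / ((x m - x j) ^ 2 + ε)

lemma polyBd_ker {ε : ℝ} (hε : 0 < ε) (m j : Fin n) :
    PolyBd (fun x : Fin n → ℝ => (ker ε m j x : ℂ)) := by
  refine ⟨Complex.measurable_ofReal.comp (by unfold ker; fun_prop), 1 / ε, 1, fun x hx => ?_⟩
  rw [Complex.norm_real, ker, norm_div, Real.norm_eq_abs,
    Real.norm_of_nonneg (by positivity), pow_one, one_div_mul_eq_div]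
  have h1 := abs_sub_le_sz hx m j
  have h2 := one_le_sz hx
  gcongr
  · linarith
  · nlinarith [sq_nonneg (x m - x j)]

lemma norm_rat_le {ε : ℝ} (hε : 0 < ε) (m j : Fin n) (x : Fin n → ℝ) :
    ‖(rat ε m j x : ℂ)‖ ≤ 1 := by
  rw [Complex.norm_real, rat, Real.norm_of_nonneg (by positivity)]
  exact div_le_one_of_le₀ (by linarith) (by positivity)

lemma measurable_rat (ε : ℝ) (m j : Fin n) : Measurable fun x : Fin n → ℝ => (rat ε m j x : ℂ) :=
  Complex.measurable_ofReal.comp (by unfold rat; fun_prop)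

lemma polyBd_rat {ε : ℝ} (hε : 0 < ε) (m j : Fin n) :
    PolyBd (fun x : Fin n → ℝ => (rat ε m j x : ℂ)) :=
  ⟨measurable_rat ε m j, 1, 0, fun x _ => by simpa using norm_rat_le hε m j x⟩

lemma integral_perm (τ : Equiv.Perm (Fin n)) (G : (Fin n → ℝ) → ℂ) :
    ∫ x, G (perm τ x) = ∫ x, G x := by
  have h := volume_measurePreserving_piCongrLeft (fun _ : Fin n => ℝ) τ.symm
  have h2 : ∀ x, MeasurableEquiv.piCongrLeft (fun _ : Fin n => ℝ) τ.symm x = perm τ x := by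
    intro x; ext l
    have := MeasurableEquiv.piCongrLeft_apply_apply τ.symm (β := fun _ : Fin n => ℝ) x (τ l)
    simpa using this
  have h3 := h.integral_comp' G
  simpa [h2] using h3

lemma integrable_perm (τ : Equiv.Perm (Fin n)) {G : (Fin n → ℝ) → ℂ} (hG : Integrable G) :
    Integrable fun x => G (perm τ x) := by
  have h := volume_measurePreserving_piCongrLeft (fun _ : Fin n => ℝ) τ.symm
  have h2 : ∀ x, MeasurableEquiv.piCongrLeft (fun _ : Fin n => ℝ) τ.symm x = perm τ x := by
    intro x; ext l
    have := MeasurableEquiv.piCongrLeft_apply_apply τ.symm (β := fun _ : Fin n => ℝ) x (τ l)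
    simpa using this
  have := h.integrable_comp_of_integrable hG
  exact this.congr (Filter.Eventually.of_forall fun x => by simp [h2])

lemma hasLineDerivAt_V (k : ℝ) {ε : ℝ} (hε : 0 < ε) (m : Fin n) (x : Fin n → ℝ) :
    HasLineDerivAt ℝ (V k ε) (V k ε x * ∑ j, 2 * k * ker ε m j x) x (Pi.single m 1) := by
  -- For `ε > 0` the weight is the exponential of a smooth function.
  have hV : ∀ y : Fin n → ℝ, V k ε y =
      Real.exp (∑ i, ∑ j, if i = j then 0 else Real.log ((y i - y j) ^ 2 + ε) * (k / 2)) := by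
    intro y
    simp only [V, Real.exp_sum]
    refine Finset.prod_congr rfl fun i _ => Finset.prod_congr rfl fun j _ => ?_
    split_ifs
    · simp
    · rw [Real.rpow_def_of_pos (by positivity)]
  let δ : Fin n → ℝ := Pi.single m 1
  have hy : ∀ i, HasDerivAt (fun t : ℝ => (x + t • δ) i) (δ i) 0 := fun i => by
    simpa using ((hasDerivAt_id (0 : ℝ)).mul_const (δ i)).const_add (x i)
  have hterm : ∀ i j, HasDerivAt (fun t : ℝ => if i = j then 0 else
      Real.log (((x + t • δ) i - (x + t • δ) j) ^ 2 + ε) * (k / 2))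
      (k * ker ε i j x * (δ i - δ j)) 0 := by
    intro i j
    split_ifs with h
    · subst h; simpa using hasDerivAt_const (0 : ℝ) (0 : ℝ)
    · have h1 := (((((hy i).sub (hy j)).pow 2).add_const ε).log
        (by simp only [Pi.pow_apply, Pi.sub_apply]; positivity)).mul_const (k / 2)
      convert! h1 using 1
      simp [ker]
      ring
  have hsum : HasDerivAt (fun t : ℝ => ∑ i, ∑ j, if i = j then 0 else
      Real.log (((x + t • δ) i - (x + t • δ) j) ^ 2 + ε) * (k / 2))
      (∑ i, ∑ j, k * ker ε i j x * (δ i - δ j)) 0 :=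
    HasDerivAt.fun_sum fun i _ => HasDerivAt.fun_sum fun j _ => hterm i j
  -- Each pair containing `m` occurs in both orders, with equal contributions since `ker` is
  -- antisymmetric.
  have hval : ∑ i, ∑ j, k * ker ε i j x * (δ i - δ j) = ∑ j, 2 * k * ker ε m j x := by
    have hanti : ∀ i, ker ε i m x = - ker ε m i x := fun i => by
      unfold ker
      rw [show (x i - x m) ^ 2 = (x m - x i) ^ 2 by ring, ← neg_div, neg_sub]
    have e1 : ∑ i, ∑ j, k * ker ε i j x * δ i = ∑ j, k * ker ε m j x := by
      rw [Finset.sum_comm]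
      refine Finset.sum_congr rfl fun j _ => ?_
      simp [δ, Pi.single_apply]
    have e2 : ∑ i, ∑ j, k * ker ε i j x * δ j = - ∑ j, k * ker ε m j x := by
      rw [← Finset.sum_neg_distrib]
      refine Finset.sum_congr rfl fun j _ => ?_
      simp [δ, Pi.single_apply, hanti]
    simp only [mul_sub, Finset.sum_sub_distrib]
    rw [e1, e2, sub_neg_eq_add, ← Finset.sum_add_distrib]
    exact Finset.sum_congr rfl fun j _ => by ring
  have := hsum.exp
  rw [hval] at this
  unfold HasLineDerivAt
  convert! this using 1
  · ext t; exact hV _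
  · simp [hV]

/-- The exponent of `x_m` exceeds `1` in real part, so the derivative exists also on the boundary of
the orthant. -/
lemma hasLineDerivAt_pw {p : Fin n → ℂ} {m : Fin n} (hre : 0 < (p m).re) (x : Fin n → ℝ) :
    HasLineDerivAt ℝ (pw (p + Pi.single m 1)) ((p m + 1) * pw p x) x (Pi.single m 1) := by
  set R : ℂ := ∏ l ∈ Finset.univ.erase m, hp (p l) (x l) with hR
  have h1 : ∀ t : ℝ, pw (p + Pi.single m 1) (x + t • Pi.single m 1) =
      hp (p m + 1) (x m + t) * R := by
    intro t
    rw [pw, ← Finset.mul_prod_erase _ _ (Finset.mem_univ m), hR]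
    congr 1
    · simp
    · refine Finset.prod_congr rfl fun l hl => ?_
      have : l ≠ m := Finset.ne_of_mem_erase hl
      simp [this]
  have h2 : pw p x = hp (p m) (x m) * R := by
    rw [pw, ← Finset.mul_prod_erase _ _ (Finset.mem_univ m)]
  unfold HasLineDerivAt
  simp only [h1]
  rw [h2]
  have h3 := hasDerivAt_hp (s := p m + 1) (by simpa using hre) (x m)
  rw [add_sub_cancel_right] at h3
  have h4 : HasDerivAt (fun t : ℝ => hp (p m + 1) (x m + t)) ((p m + 1) * hp (p m) (x m)) 0 :=
    HasDerivAt.comp_const_add (x m) 0 (by simpa using h3)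
  simpa [mul_assoc] using h4.mul_const R

/-! ### Adjoint action of a Dunkl operator on a staircase monomial -/

/-- The integral `∫ f(x) ∏_l (x_l)_+^{s_l} w(x) dx`, in effect over the orthant. -/
noncomputable def wInt (f : W n) (s : Fin n → ℂ) (w : (Fin n → ℝ) → ℂ) : ℂ :=
  ∫ x, (f : (Fin n → ℝ) → ℂ) x * pw s x * w x

lemma integral_add_perm (τ : Equiv.Perm (Fin n)) {G : (Fin n → ℝ) → ℂ} (hG : Integrable G) :
    ∫ x, (G x + G (perm τ x)) = 2 * ∫ x, G x := by
  rw [integral_add hG (integrable_perm τ hG), integral_perm, two_mul]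

section step
variable {p : Fin n → ℂ} {m : Fin n}

lemma re_stair (h0 : 0 < (p m).re) (hpre : ∀ j < m, p j = p m + 1)
    (hpost : ∀ j, m < j → p j = p m) (l : Fin n) : -1 < (p l).re := by
  rcases lt_trichotomy l m with h | h | h
  · rw [hpre l h, Complex.add_re, Complex.one_re]; linarith
  · rw [h]; linarith
  · rw [hpost l h]; linarith

lemma re_stair_add (hp : ∀ l, -1 < (p l).re) (l : Fin n) :
    -1 < ((p + Pi.single m 1 : Fin n → ℂ) l).re := by
  by_cases h : l = m
  · subst h; simp; linarith [hp l]
  · simpa [h] using hp l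

/-- Integration by parts in `x_m` against the regularised weight. -/
lemma wInt_ibp {k ε : ℝ} (hk : 0 < k) (hε : 0 < ε) (hε1 : ε ≤ 1) (h0 : 0 < (p m).re)
    (hp : ∀ l, -1 < (p l).re) (f : W n) :
    (p m + 1) * wInt f p (fun x => (V k ε x : ℂ)) +
      ∑ j, 2 * k * wInt f (p + Pi.single m 1) (fun x => (V k ε x : ℂ) * (ker ε m j x : ℂ)) =
    - wInt (pdW m f) (p + Pi.single m 1) (fun x => (V k ε x : ℂ)) := by
  have hs := re_stair_add (m := m) hp
  have hV := polyBd_V (n := n) hk hε.le hε1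
  have hK := fun j => hV.mul (polyBd_ker hε m j)
  have i1 := (integrable_pw f.2 hp hV).const_mul (p m + 1)
  have i2 := fun j => (integrable_pw f.2 hs (hK j)).const_mul (2 * k : ℂ)
  have i3 := integrable_pw (pdW m f).2 hs hV
  have i4 := integrable_pw f.2 hs hV
  have hg : ∀ x, HasLineDerivAt ℝ (fun x => pw (p + Pi.single m 1) x * (V k ε x : ℂ))
      ((p m + 1) * pw p x * (V k ε x : ℂ) + pw (p + Pi.single m 1) x *
        ((V k ε x * ∑ j, 2 * k * ker ε m j x : ℝ) : ℂ)) x (Pi.single m 1) := by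
    intro x
    have h1 := hasLineDerivAt_pw h0 x
    have h2 := hasLineDerivAt_V k hε m x
    unfold HasLineDerivAt at h1 h2 ⊢
    convert! h1.mul h2.ofReal_comp using 1
    simp
  have hf : ∀ x, HasLineDerivAt ℝ (f : (Fin n → ℝ) → ℂ) (pd m f x) x (Pi.single m 1) := fun x =>
    ((W.contDiff f).differentiable one_ne_zero x).hasFDerivAt.hasLineDerivAt _
  have hexp : ∀ x, (f : (Fin n → ℝ) → ℂ) x *
      ((p m + 1) * pw p x * (V k ε x : ℂ) + pw (p + Pi.single m 1) x *
        ((V k ε x * ∑ j, 2 * k * ker ε m j x : ℝ) : ℂ)) =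
      (p m + 1) * ((f : (Fin n → ℝ) → ℂ) x * pw p x * (V k ε x : ℂ)) +
      ∑ j, 2 * k * ((f : (Fin n → ℝ) → ℂ) x * pw (p + Pi.single m 1) x *
        ((V k ε x : ℂ) * (ker ε m j x : ℂ))) := by
    intro x
    push_cast
    rw [mul_add, Finset.mul_sum, Finset.mul_sum, Finset.mul_sum]
    congr 1
    · ring
    · exact Finset.sum_congr rfl fun j _ => by ring
  have key := integral_bilinear_hasLineDerivAt_right_eq_neg_left_of_integrable
    (B := ContinuousLinearMap.mul ℝ ℂ) (μ := (volume : Measure (Fin n → ℝ)))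
    (f := (f : (Fin n → ℝ) → ℂ)) (f' := pd m f)
    (g := fun x => pw (p + Pi.single m 1) x * (V k ε x : ℂ))
    (v := Pi.single m 1)
    (g' := fun x => (p m + 1) * pw p x * (V k ε x : ℂ) + pw (p + Pi.single m 1) x *
        ((V k ε x * ∑ j, 2 * k * ker ε m j x : ℝ) : ℂ))
    (by simpa [mul_assoc] using! i3)
    (by
      simp only [ContinuousLinearMap.mul_apply', hexp]
      exact i1.add (integrable_finsetSum _ fun j _ => i2 j))
    (by simpa [mul_assoc] using i4) (fun x _ => hf x) (fun x _ => hg x)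
  simp only [ContinuousLinearMap.mul_apply', hexp] at key
  rw [integral_add i1 (integrable_finsetSum _ fun j _ => i2 j),
    integral_finsetSum _ fun j _ => i2 j] at key
  simp only [integral_const_mul] at key
  unfold wInt
  rw [key]
  congr 1
  refine integral_congr_ae (Filter.Eventually.of_forall fun x => ?_)
  simp only [← mul_assoc]
  rfl

/-- Symmetrisation under the transposition `σ` of `m` and `j`: the regularised kernel is odd under
`σ` and the weight is even, so only `f · pw s - (f · pw s) ∘ σ` contributes. The multi-exponent
`s = p + e_m` is `σ`-invariant for `j < m`, and `pw s - pw s ∘ σ = (x_m - x_j) pw p` for `j > m`. -/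
lemma wInt_ker {k ε : ℝ} (hk : 0 < k) (hε : 0 < ε) (hε1 : ε ≤ 1)
    (hp : ∀ l, -1 < (p l).re) (hpre : ∀ j < m, p j = p m + 1)
    (hpost : ∀ j, m < j → p j = p m) (j : Fin n) (f : W n) :
    2 * wInt f (p + Pi.single m 1) (fun x => (V k ε x : ℂ) * (ker ε m j x : ℂ)) =
      wInt (quot m j f) (p + Pi.single m 1) (fun x => (V k ε x : ℂ) * (rat ε m j x : ℂ)) +
      if m < j then wInt f p (fun x => (V k ε x : ℂ) * (rat ε m j x : ℂ)) else 0 := by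
  have hs := re_stair_add (m := m) hp
  have hV := polyBd_V (n := n) hk hε.le hε1
  have i1 := integrable_pw f.2 hs (hV.mul (polyBd_ker hε m j))
  have i2 := integrable_pw (quot m j f).2 hs (hV.mul (polyBd_rat hε m j))
  have i3 := integrable_pw f.2 hp (hV.mul (polyBd_rat hε m j))
  have hu : ∀ x : Fin n → ℝ, (rat ε m j x : ℂ) = ((x m - x j : ℝ) : ℂ) * (ker ε m j x : ℂ) := by
    intro x
    rw [← Complex.ofReal_mul, rat, ker]; congr 1; ring
  have hker : ∀ x : Fin n → ℝ, ker ε m j (perm (Equiv.swap m j) x) = - ker ε m j x := by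
    intro x
    simp only [ker, perm_apply, Equiv.swap_apply_left, Equiv.swap_apply_right]
    rw [show (x j - x m) ^ 2 = (x m - x j) ^ 2 by ring, ← neg_div, neg_sub]
  have hrat : ∀ x : Fin n → ℝ, rat ε m j (perm (Equiv.swap m j) x) = rat ε m j x := by
    intro x
    simp only [rat, perm_apply, Equiv.swap_apply_left, Equiv.swap_apply_right]
    rw [show (x j - x m) ^ 2 = (x m - x j) ^ 2 by ring]
  have hsplit : 2 * wInt f (p + Pi.single m 1) (fun x => (V k ε x : ℂ) * (ker ε m j x : ℂ)) =
      ∫ x, ((f : (Fin n → ℝ) → ℂ) x * pw (p + Pi.single m 1) x *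
          ((V k ε x : ℂ) * (ker ε m j x : ℂ)) +
        (f : (Fin n → ℝ) → ℂ) (perm (Equiv.swap m j) x) *
          pw (p + Pi.single m 1) (perm (Equiv.swap m j) x) *
          ((V k ε (perm (Equiv.swap m j) x) : ℂ) * (ker ε m j (perm (Equiv.swap m j) x) : ℂ))) := by
    exact (integral_add_perm _ i1).symm
  rw [hsplit]
  by_cases hmj : m < j
  · rw [if_pos hmj]
    have hinv : p ∘ Equiv.swap m j = p := by
      ext l
      simp only [Function.comp, Equiv.swap_apply_def]
      split_ifs with h1 h2
      · rw [h1, hpost j hmj]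
      · rw [h2, hpost j hmj]
      · rfl
    unfold wInt
    -- The exponent `p` is `σ`-invariant. The integral of `f · pw p` is evaluated at `σ x`, because the
    -- product difference splits as `(f - f ∘ σ) · pw s + (f ∘ σ) · (pw s - pw s ∘ σ)`.
    rw [← integral_perm (Equiv.swap m j) (fun x => (f : (Fin n → ℝ) → ℂ) x *
        pw p x * ((V k ε x : ℂ) * (rat ε m j x : ℂ))),
      ← integral_add i2 (integrable_perm (Equiv.swap m j) i3)]
    refine integral_congr_ae (Filter.Eventually.of_forall fun x => ?_)
    have hq := quot_spec m j f x
    simp only [pw_add_single]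
    simp only [V_perm, hker, hrat, pw_perm, hinv, perm_apply, Equiv.swap_apply_left, hu]
    push_cast at hq ⊢
    linear_combination (x m : ℂ) * pw p x * V k ε x * ker ε m j x * (-hq)
  · rw [if_neg hmj, add_zero]
    have hinv : (p + Pi.single m 1 : Fin n → ℂ) ∘ Equiv.swap m j = p + Pi.single m 1 := by
      ext l
      rcases eq_or_lt_of_le (not_lt.1 hmj) with h | h
      · simp [h]
      · simp only [Function.comp, Equiv.swap_apply_def]
        split_ifs with h1 h2
        · simp [h1, hpre j h, h.ne]
        · simp [h2, hpre j h, h.ne]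
        · rfl
    unfold wInt
    refine integral_congr_ae (Filter.Eventually.of_forall fun x => ?_)
    have hq := quot_spec m j f x
    simp only [V_perm, hker, pw_perm, hinv, hu]
    push_cast at hq ⊢
    linear_combination pw (p + Pi.single m 1) x * V k ε x * ker ε m j x * (-hq)

lemma tendsto_Int (f : W n) {s : Fin n → ℂ} (hs : ∀ l, -1 < (s l).re) {D : ℝ} {M : ℕ}
    {w : ℕ → (Fin n → ℝ) → ℂ} {w₀ : (Fin n → ℝ) → ℂ} (hm : ∀ N, Measurable (w N))
    (hw : ∀ N, ∀ x ∈ Rplus n, ‖w N x‖ ≤ D * sz x ^ M)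
    (hlim : ∀ x, Filter.Tendsto (fun N => w N x) Filter.atTop (nhds (w₀ x))) :
    Filter.Tendsto (fun N => wInt f s (w N)) Filter.atTop (nhds (wInt f s w₀)) := by
  obtain ⟨g, hg, h⟩ := exists_dom f.2 hs D M
  exact tendsto_integral_of_dominated_convergence g
    (fun N => aesm_integrand s (W.contDiff f).continuous (hm N)) hg
    (fun N => Filter.Eventually.of_forall (h _ (hw N)))
    (Filter.Eventually.of_forall fun x => (hlim x).const_mul _)

lemma tendsto_V {k : ℝ} (hk : 0 < k) (x : Fin n → ℝ) :
    Filter.Tendsto (fun N : ℕ => (V k (1 / ((N : ℝ) + 1)) x : ℂ)) Filter.atTop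
      (nhds (V k 0 x : ℂ)) := by
  have h : Continuous fun ε : ℝ => (V k ε x : ℂ) := by
    refine Complex.continuous_ofReal.comp ?_
    unfold V
    refine continuous_finsetProd _ fun i _ => continuous_finsetProd _ fun j _ => ?_
    split_ifs
    · exact continuous_const
    · exact (continuous_const.add continuous_id).rpow_const fun _ => Or.inr (by positivity)
  exact (h.tendsto 0).comp tendsto_one_div_add_atTop_nhds_zero_nat

lemma V_zero_of_eq {k : ℝ} (hk : 0 < k) {i j : Fin n} (hij : i ≠ j) {x : Fin n → ℝ}
    (h : x i = x j) : V k 0 x = 0 := by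
  refine Finset.prod_eq_zero (Finset.mem_univ i) (Finset.prod_eq_zero (Finset.mem_univ j) ?_)
  rw [if_neg hij, h, sub_self]
  simp [Real.zero_rpow (by positivity : k / 2 ≠ 0)]

/-- On the hyperplane `x_m = x_j` the factor `rat` does not tend to `1`, but there the limit weight
vanishes, as `k > 0`. -/
lemma tendsto_V_rat {k : ℝ} (hk : 0 < k) {m j : Fin n} (hmj : m ≠ j) (x : Fin n → ℝ) :
    Filter.Tendsto (fun N : ℕ => (V k (1 / ((N : ℝ) + 1)) x : ℂ) *
      (rat (1 / ((N : ℝ) + 1)) m j x : ℂ)) Filter.atTop (nhds (V k 0 x : ℂ)) := by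
  by_cases h : x m = x j
  · rw [V_zero_of_eq hk hmj h]
    simp [rat, h]
  · have hu : (x m - x j) ^ 2 ≠ 0 := by
      have := sub_ne_zero.2 h
      positivity
    have h1 : Filter.Tendsto (fun N : ℕ => (rat (1 / ((N : ℝ) + 1)) m j x : ℂ)) Filter.atTop
        (nhds ((1 : ℝ) : ℂ)) := by
      refine (Complex.continuous_ofReal.tendsto 1).comp ?_
      have h2 : Filter.Tendsto (fun N : ℕ => (x m - x j) ^ 2 + 1 / ((N : ℝ) + 1)) Filter.atTop
          (nhds ((x m - x j) ^ 2 + 0)) :=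
        tendsto_one_div_add_atTop_nhds_zero_nat.const_add _
      have h3 := (tendsto_const_nhds (x := (x m - x j) ^ 2)).div h2 (by simpa using hu)
      rwa [add_zero, div_self hu] at h3
    simpa using (tendsto_V hk x).mul h1

lemma wInt_add (f g : W n) {s : Fin n → ℂ} (hs : ∀ l, -1 < (s l).re) {w : (Fin n → ℝ) → ℂ}
    (hw : PolyBd w) : wInt (f + g) s w = wInt f s w + wInt g s w := by
  unfold wInt
  rw [← integral_add (integrable_pw f.2 hs hw) (integrable_pw g.2 hs hw)]
  refine integral_congr_ae (Filter.Eventually.of_forall fun x => ?_)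
  simp only [Submodule.coe_add, Pi.add_apply]
  ring

lemma wInt_smul (c : ℂ) (f : W n) (s : Fin n → ℂ) (w : (Fin n → ℝ) → ℂ) :
    wInt (c • f) s w = c * wInt f s w := by
  unfold wInt
  rw [← integral_const_mul]
  refine integral_congr_ae (Filter.Eventually.of_forall fun x => ?_)
  simp only [Submodule.coe_smul, Pi.smul_apply, smul_eq_mul]
  ring

/-- The functional `f ↦ wInt f s w` as a linear map. -/
noncomputable def wIntL (s : Fin n → ℂ) (hs : ∀ l, -1 < (s l).re) {w : (Fin n → ℝ) → ℂ}
    (hw : PolyBd w) : W n →ₗ[ℂ] ℂ where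
  toFun f := wInt f s w
  map_add' f g := wInt_add f g hs hw
  map_smul' c f := wInt_smul c f s w

/-- Moving one Dunkl operator onto the staircase monomial with exponents `(σ, …, σ, σ - 1, …, σ - 1)`
(with `σ = p m + 1`, the entry `σ - 1` starting at position `m`): each transposition of `m` with a
later index contributes one multiple of `k`. -/
lemma wInt_dunkl {k : ℝ} (hk : 0 < k) (h0 : 0 < (p m).re) (hpre : ∀ j < m, p j = p m + 1)
    (hpost : ∀ j, m < j → p j = p m) (f : W n) :
    wInt (dunkl k m f) (p + Pi.single m 1) (fun x => (V k 0 x : ℂ)) =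
      -(p m + 1 + k * ((n : ℂ) - 1 - (m : ℕ))) * wInt f p (fun x => (V k 0 x : ℂ)) := by
  have hp := re_stair h0 hpre hpost
  have hs := re_stair_add (m := m) hp
  have hN : ∀ N : ℕ, (0 : ℝ) < 1 / ((N : ℝ) + 1) := fun N => by positivity
  have hN1 : ∀ N : ℕ, 1 / ((N : ℝ) + 1) ≤ (1 : ℝ) := fun N =>
    (div_le_one (by positivity)).2 (by simp)
  have hid : ∀ N : ℕ,
      wInt (pdW m f) (p + Pi.single m 1) (fun x => (V k (1 / ((N : ℝ) + 1)) x : ℂ)) +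
      (p m + 1) * wInt f p (fun x => (V k (1 / ((N : ℝ) + 1)) x : ℂ)) +
      ∑ j, k * (wInt (quot m j f) (p + Pi.single m 1)
          (fun x => (V k (1 / ((N : ℝ) + 1)) x : ℂ) * (rat (1 / ((N : ℝ) + 1)) m j x : ℂ)) +
        if m < j then wInt f p
          (fun x => (V k (1 / ((N : ℝ) + 1)) x : ℂ) * (rat (1 / ((N : ℝ) + 1)) m j x : ℂ))
        else 0) = 0 := by
    intro N
    have h1 := wInt_ibp hk (hN N) (hN1 N) h0 hp f
    simp only [← wInt_ker hk (hN N) (hN1 N) hp hpre hpost]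
    have h2 : ∀ j, (k : ℂ) * (2 * wInt f (p + Pi.single m 1)
        (fun x => (V k (1 / ((N : ℝ) + 1)) x : ℂ) * (ker (1 / ((N : ℝ) + 1)) m j x : ℂ))) =
        2 * k * wInt f (p + Pi.single m 1)
        (fun x => (V k (1 / ((N : ℝ) + 1)) x : ℂ) * (ker (1 / ((N : ℝ) + 1)) m j x : ℂ)) :=
      fun j => by ring
    simp only [h2]
    linear_combination h1
  have hmV : ∀ N : ℕ, Measurable fun x : Fin n → ℝ => (V k (1 / ((N : ℝ) + 1)) x : ℂ) := fun N =>
    Complex.measurable_ofReal.comp (measurable_V k _)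
  have tV : ∀ (g : W n) {s : Fin n → ℂ}, (∀ l, -1 < (s l).re) →
      Filter.Tendsto (fun N : ℕ => wInt g s (fun x => (V k (1 / ((N : ℝ) + 1)) x : ℂ)))
        Filter.atTop (nhds (wInt g s fun x => (V k 0 x : ℂ))) := fun g s hs =>
    tendsto_Int g hs hmV (fun N x hx => norm_V_le hk (hN N).le (hN1 N) hx) (tendsto_V hk)
  have tR : ∀ (g : W n) {s : Fin n → ℂ} {j : Fin n}, m ≠ j → (∀ l, -1 < (s l).re) →
      Filter.Tendsto (fun N : ℕ => wInt g s (fun x => (V k (1 / ((N : ℝ) + 1)) x : ℂ) *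
        (rat (1 / ((N : ℝ) + 1)) m j x : ℂ)))
        Filter.atTop (nhds (wInt g s fun x => (V k 0 x : ℂ))) := fun g s j hj hs =>
    tendsto_Int g hs (fun N => (hmV N).mul (measurable_rat _ m j))
      (fun N x hx => by
        rw [norm_mul]
        exact (mul_le_of_le_one_right (norm_nonneg _) (norm_rat_le (hN N) m j x)).trans
          (norm_V_le hk (hN N).le (hN1 N) hx)) (tendsto_V_rat hk hj)
  have tQ : ∀ j, Filter.Tendsto (fun N : ℕ => (k : ℂ) * (wInt (quot m j f) (p + Pi.single m 1)
          (fun x => (V k (1 / ((N : ℝ) + 1)) x : ℂ) * (rat (1 / ((N : ℝ) + 1)) m j x : ℂ)) +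
        if m < j then wInt f p
          (fun x => (V k (1 / ((N : ℝ) + 1)) x : ℂ) * (rat (1 / ((N : ℝ) + 1)) m j x : ℂ))
        else 0)) Filter.atTop (nhds (k * (wInt (quot m j f) (p + Pi.single m 1)
          (fun x => (V k 0 x : ℂ)) + if m < j then wInt f p (fun x => (V k 0 x : ℂ)) else 0))) := by
    intro j
    refine Filter.Tendsto.const_mul _ ?_
    by_cases hj : m = j
    · subst hj
      have : quot m m f = 0 := by simp [quot]
      simp [this, wInt]
    · refine (tR _ hj hs).add ?_
      split_ifs
      · exact tR _ hj hp
      · exact tendsto_const_nhds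
  have hlim := ((tV (pdW m f) hs).add ((tV f hp).const_mul (p m + 1))).add
    (tendsto_finsetSum Finset.univ fun j _ => tQ j)
  have h := tendsto_nhds_unique hlim (by simp only [hid]; exact tendsto_const_nhds)
  have hV0 : PolyBd (fun x : Fin n → ℝ => (V k 0 x : ℂ)) := polyBd_V hk le_rfl zero_le_one
  have hd : wInt (dunkl k m f) (p + Pi.single m 1) (fun x => (V k 0 x : ℂ)) =
      wInt (pdW m f) (p + Pi.single m 1) (fun x => (V k 0 x : ℂ)) +
      k * ∑ j, wInt (quot m j f) (p + Pi.single m 1) (fun x => (V k 0 x : ℂ)) := by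
    change wIntL _ hs hV0 (dunkl k m f) = wIntL _ hs hV0 (pdW m f) + k * ∑ j, wIntL _ hs hV0 (quot m j f)
    simp [dunkl, map_sum]
  -- Each of the `n - 1 - m` indices `j > m` contributes one multiple of `k ⟨f, p⟩`.
  have hc : ∑ j : Fin n, (if m < j then wInt f p (fun x => (V k 0 x : ℂ)) else 0) =
      ((n : ℂ) - 1 - (m : ℕ)) * wInt f p (fun x => (V k 0 x : ℂ)) := by
    rw [← Finset.sum_filter, Finset.sum_const, nsmul_eq_mul]
    congr 1
    have : (Finset.univ.filter fun j => m < j) = Finset.Ioi m := by ext; simp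
    rw [this, Fin.card_Ioi, Nat.sub_sub, Nat.cast_sub (by have := m.2; omega)]
    push_cast; ring
  rw [← Finset.mul_sum, Finset.sum_add_distrib, hc] at h
  rw [hd]
  linear_combination h

end step

/-! ### Functional equation and continuation -/

/-- The composition `T_{m-1} ∘ ⋯ ∘ T_0` of the first `m` Dunkl operators; factors with index `≥ n`
are omitted. -/
noncomputable def dunklPart (k : ℝ) : ℕ → (W n →ₗ[ℂ] W n)
  | 0 => LinearMap.id
  | m + 1 => if h : m < n then dunkl k ⟨m, h⟩ ∘ₗ dunklPart k m else dunklPart k m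

lemma tame_dunklPart (k : ℝ) (m : ℕ) : Tame (dunklPart (n := n) k m) := by
  induction m with
  | zero => exact Tame.id
  | succ m ih =>
    rw [dunklPart]
    split_ifs
    · exact (tame_dunkl k _).comp ih
    · exact ih

/-- The multi-exponent with entries `σ` in the first `m` places and `σ - 1` in the others. -/
def stair (σ : ℂ) (m : ℕ) (l : Fin n) : ℂ := if (l : ℕ) < m then σ else σ - 1

lemma stair_succ (σ : ℂ) (m : Fin n) :
    stair σ ((m : ℕ) + 1) = (stair σ m + Pi.single m 1 : Fin n → ℂ) := by
  ext l
  simp only [stair, Pi.add_apply, Pi.single_apply, Fin.ext_iff]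
  rcases lt_trichotomy (l : ℕ) m with h | h | h
  · rw [if_pos (by omega), if_pos h, if_neg h.ne, add_zero]
  · rw [if_pos (by omega), if_neg (by omega), if_pos h]; ring
  · rw [if_neg (by omega), if_neg (by omega), if_neg h.ne', add_zero]

lemma wInt_dunklPart {k : ℝ} (hk : 0 < k) {σ : ℂ} (hσ : 1 < σ.re) (f : W n) {m : ℕ} (hm : m ≤ n) :
    wInt (dunklPart k m f) (stair σ m) (fun x => (V k 0 x : ℂ)) =
      (∏ i ∈ Finset.range m, -(σ + k * ((n : ℂ) - 1 - i))) *
        wInt f (fun _ => σ - 1) (fun x => (V k 0 x : ℂ)) := by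
  induction m with
  | zero =>
    have : stair (n := n) σ 0 = fun _ => σ - 1 := by ext l; simp [stair]
    simp [dunklPart, this]
  | succ m ih =>
    have h : m < n := hm
    have hs : stair σ m (⟨m, h⟩ : Fin n) = σ - 1 := by simp [stair]
    have key := wInt_dunkl (n := n) (m := ⟨m, h⟩) (p := stair σ m) hk
      (by rw [hs, Complex.sub_re, Complex.one_re]; linarith)
      (fun j hj => by
        rw [hs, stair, if_pos (by simpa [Fin.lt_def] using hj)]; ring)
      (fun j hj => by
        rw [hs, stair, if_neg (by simpa [Fin.lt_def] using! (le_of_lt hj))])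
      (dunklPart k m f)
    have hst := stair_succ σ (⟨m, h⟩ : Fin n)
    simp only at hst
    rw [dunklPart, dif_pos h, LinearMap.comp_apply, hst, key, ih h.le, hs,
      Finset.prod_range_succ]
    simp only [sub_add_cancel]
    ring

/-- The product `T_{n-1} ∘ ⋯ ∘ T_0` of all Dunkl operators. -/
noncomputable def dunklProd (k : ℝ) : W n →ₗ[ℂ] W n := dunklPart k n

variable (n) in
/-- The abscissa `μ₀ = k(n - 1)`. -/
noncomputable def mu0 (k : ℝ) : ℝ := k * ((n : ℝ) - 1)

/-- The normalised zeta integral `(d_n(k) Γ_n(μ;k))⁻¹ ∫ f D^{μ-μ₀-1} ω_k` on test functions. -/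
noncomputable def F (k : ℝ) (μ : ℂ) (f : W n) : ℂ :=
  ((dnk n k : ℂ) * Gammank n k μ)⁻¹ *
    wInt f (fun _ => μ - (mu0 n k : ℂ) - 1) (fun x => (V k 0 x : ℂ))

/-- The recursion `Γ_n(μ+1;k) = ∏_i (μ - ki) Γ_n(μ;k)`, written with reciprocals so that it also
holds at the poles. -/
lemma inv_Gammank (k : ℝ) (μ : ℂ) :
    (Gammank n k μ)⁻¹ = (∏ i ∈ Finset.range n, (μ - k * i)) * (Gammank n k (μ + 1))⁻¹ := by
  unfold Gammank
  rw [← Finset.prod_inv_distrib, ← Finset.prod_inv_distrib, ← Finset.prod_mul_distrib]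
  refine Finset.prod_congr rfl fun i _ => ?_
  have := Complex.one_div_Gamma_eq_self_mul_one_div_Gamma_add_one (μ - k * i)
  push_cast
  rw [this]
  ring_nf

lemma F_rec_aux {k : ℝ} (hk : 0 < k) {μ : ℂ} (hμ : mu0 n k + 1 < μ.re) (f : W n) :
    F k μ f = (-1) ^ n * F k (μ + 1) (dunklProd k f) := by
  have h := wInt_dunklPart hk (σ := μ - mu0 n k) (by simp; linarith) f le_rfl
  have h1 : stair (n := n) (μ - mu0 n k) n = fun _ => μ + 1 - (mu0 n k : ℂ) - 1 := by
    ext l; rw [stair, if_pos l.2]; ring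
  have h2 : ∏ i ∈ Finset.range n, -(μ - mu0 n k + k * ((n : ℂ) - 1 - i)) =
      (-1) ^ n * ∏ i ∈ Finset.range n, (μ - k * i) := by
    rw [Finset.prod_neg, Finset.card_range]
    congr 1
    refine Finset.prod_congr rfl fun i _ => ?_
    unfold mu0; push_cast; ring
  rw [h1, h2] at h
  have hsq : ((-1 : ℂ) ^ n) * (-1) ^ n = 1 := by rw [← mul_pow]; simp
  unfold F dunklProd
  rw [h, mul_inv, mul_inv, inv_Gammank]
  linear_combination (-((dnk n k : ℂ)⁻¹ * ((∏ i ∈ Finset.range n, (μ - k * i)) *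
    (Gammank n k (μ + 1))⁻¹) * wInt f (fun _ => μ - (mu0 n k : ℂ) - 1) (fun x => (V k 0 x : ℂ)))) * hsq

lemma differentiableAt_F {k : ℝ} (hk : 0 < k) {μ : ℂ} (hμ : mu0 n k < μ.re) (f : W n) :
    DifferentiableAt ℂ (fun μ => F k μ f) μ := by
  have h1 : Differentiable ℂ fun μ => (Gammank n k μ)⁻¹ := by
    unfold Gammank
    simp only [← Finset.prod_inv_distrib]
    exact Differentiable.fun_finsetProd fun i _ =>
      Complex.differentiable_one_div_Gamma.comp (differentiable_id.sub_const _)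
  have h2 := differentiableAt_integral_pw f.2 (polyBd_V (n := n) hk le_rfl zero_le_one)
    (z₀ := μ - (mu0 n k : ℂ) - 1) (by simp; linarith)
  have h3 : DifferentiableAt ℂ (fun μ : ℂ => μ - (mu0 n k : ℂ) - 1) μ := by fun_prop
  have h4 := h2.comp μ h3
  unfold F wInt
  simp only [mul_inv]
  exact ((h1 μ).const_mul _).mul h4

/-- The functional equation on the full domain of convergence, obtained from `F_rec_aux` by analytic
continuation. -/
lemma F_rec {k : ℝ} (hk : 0 < k) {μ : ℂ} (hμ : mu0 n k < μ.re) (f : W n) :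
    F k μ f = (-1) ^ n * F k (μ + 1) (dunklProd k f) := by
  set U : Set ℂ := {z | mu0 n k < z.re} with hU
  have hopen : IsOpen U := isOpen_lt continuous_const Complex.continuous_re
  have hf : AnalyticOnNhd ℂ (fun z => F k z f) U :=
    DifferentiableOn.analyticOnNhd
      (fun z hz => (differentiableAt_F hk hz f).differentiableWithinAt) hopen
  have hg : AnalyticOnNhd ℂ (fun z => (-1) ^ n * F k (z + 1) (dunklProd k f)) U := by
    refine DifferentiableOn.analyticOnNhd (fun z hz => ?_) hopen
    have hz' : mu0 n k < (z + 1).re := by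
      have : mu0 n k < z.re := hz
      simp; linarith
    have h3 : DifferentiableAt ℂ (fun μ : ℂ => μ + 1) z := by fun_prop
    exact (((differentiableAt_F hk hz' (dunklProd k f)).comp z h3).const_mul
      _).differentiableWithinAt
  have hpre : IsPreconnected U := (convex_halfSpace_re_gt (mu0 n k)).isPreconnected
  have h0 : ((mu0 n k + 2 : ℝ) : ℂ) ∈ U := by
    change mu0 n k < _
    rw [Complex.ofReal_re]; linarith
  refine hf.eqOn_of_preconnected_of_eventuallyEq hg hpre h0 ?_ hμ
  have : {z : ℂ | mu0 n k + 1 < z.re} ∈ nhds ((mu0 n k + 2 : ℝ) : ℂ) :=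
    (isOpen_lt continuous_const Complex.continuous_re).mem_nhds
      (by rw [Set.mem_ofPred_eq, Complex.ofReal_re]; linarith)
  filter_upwards [this] with z hz using F_rec_aux hk hz f

/-- The continuation of `F` obtained by applying the functional equation `N` times; it is meaningful
for `Re μ + N > μ₀`. -/
noncomputable def G (k : ℝ) (N : ℕ) (μ : ℂ) (f : W n) : ℂ :=
  ((-1) ^ n) ^ N * F k (μ + N) ((dunklProd k ^ N) f)

lemma G_succ {k : ℝ} (hk : 0 < k) {N : ℕ} {μ : ℂ} (hμ : mu0 n k < μ.re + N) (f : W n) :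
    G k (N + 1) μ f = G k N μ f := by
  unfold G
  rw [F_rec hk (μ := μ + N) (by simpa using hμ), pow_succ' (dunklProd k)]
  push_cast
  rw [Module.End.mul_apply, add_assoc]
  ring

lemma G_eq {k : ℝ} (hk : 0 < k) {N M : ℕ} (hNM : N ≤ M) {μ : ℂ} (hμ : mu0 n k < μ.re + N)
    (f : W n) : G k M μ f = G k N μ f := by
  induction M, hNM using Nat.le_induction with
  | base => rfl
  | succ M hM ih =>
    have : (N : ℝ) ≤ M := by exact_mod_cast hM
    rw [G_succ hk (by linarith), ih]

lemma G_eq' {k : ℝ} (hk : 0 < k) {N M : ℕ} {μ : ℂ} (hN : mu0 n k < μ.re + N)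
    (hM : mu0 n k < μ.re + M) (f : W n) : G k M μ f = G k N μ f := by
  rcases le_total N M with h | h
  · exact G_eq hk h hN f
  · exact (G_eq hk h hM f).symm

lemma differentiableAt_G {k : ℝ} (hk : 0 < k) {N : ℕ} {μ : ℂ} (hμ : mu0 n k < μ.re + N)
    (f : W n) : DifferentiableAt ℂ (fun μ => G k N μ f) μ := by
  have h3 : DifferentiableAt ℂ (fun μ : ℂ => μ + N) μ := by fun_prop
  exact ((differentiableAt_F hk (μ := μ + N) (by simpa using hμ) _).comp μ h3).const_mul _

variable (n) in
/-- A number of steps that moves `μ` into the domain of convergence. -/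
noncomputable def shift (k : ℝ) (μ : ℂ) : ℕ := ⌈mu0 n k - μ.re⌉₊ + 1

lemma shift_spec (k : ℝ) (μ : ℂ) : mu0 n k < μ.re + shift n k μ := by
  have := Nat.le_ceil (mu0 n k - μ.re)
  unfold shift; push_cast; linarith

lemma tame_pow {T : W n →ₗ[ℂ] W n} (hT : Tame T) (N : ℕ) : Tame (T ^ N) := by
  induction N with
  | zero => exact Tame.id
  | succ N ih => rw [pow_succ]; exact ih.comp hT

lemma bdFun_wIntL {s : Fin n → ℂ} (hs : ∀ l, -1 < (s l).re) {w : (Fin n → ℝ) → ℂ}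
    (hw : PolyBd w) : BdFun (wIntL s hs hw) := by
  obtain ⟨q, K, h⟩ := exists_integral_bound hw hs
  exact ⟨0, q, K, h⟩

/-- The Riesz distribution `R_μ`, as the continuation `G` with the number of steps given by `shift`. -/
noncomputable def riesz {k : ℝ} (hk : 0 < k) (μ : ℂ) : SchwartzMap (Fin n → ℝ) ℂ →L[ℂ] ℂ :=
  (((-1) ^ n) ^ shift n k μ * ((dnk n k : ℂ) * Gammank n k (μ + shift n k μ))⁻¹) •
    ⟨(wIntL (fun _ => μ + shift n k μ - (mu0 n k : ℂ) - 1)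
      (fun _ => by have := shift_spec (n := n) k μ; simp; linarith)
      (polyBd_V (n := n) hk le_rfl zero_le_one) ∘ₗ (dunklProd k ^ shift n k μ)) ∘ₗ ofSchwartz,
      ((bdFun_wIntL _ _).comp (tame_pow (tame_dunklPart k n) _)).continuous⟩

lemma riesz_apply {k : ℝ} (hk : 0 < k) (μ : ℂ) (φ : SchwartzMap (Fin n → ℝ) ℂ) :
    riesz hk μ φ = G k (shift n k μ) μ (ofSchwartz φ) := by
  unfold G F
  rw [← mul_assoc]
  rfl

lemma measurableSet_Rplus : MeasurableSet (Rplus n) := by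
  have : Rplus n = ⋂ i, {x : Fin n → ℝ | 0 < x i} := by ext; simp [Rplus]
  rw [this]
  exact MeasurableSet.iInter fun i => measurableSet_lt measurable_const (measurable_pi_apply i)

lemma integrand_eq {k : ℝ} (hk : 0 < k) (μ : ℂ) (φ : SchwartzMap (Fin n → ℝ) ℂ) {x : Fin n → ℝ}
    (hx : x ∈ Rplus n) :
    φ x * (∏ i, (x i : ℂ) ^ (μ - ((k * ((n : ℝ) - 1) : ℝ) : ℂ) - 1)) * (wk n k x : ℂ) =
      φ x * pw (fun _ => μ - (mu0 n k : ℂ) - 1) x * (V k 0 x : ℂ) := by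
  rw [wk_eq_V hk]
  congr 2
  exact Finset.prod_congr rfl fun l _ => (hp_of_pos (hx l) _).symm

lemma integrableOn_riesz {k : ℝ} (hk : 0 < k) {μ : ℂ} (hμ : mu0 n k < μ.re)
    (φ : SchwartzMap (Fin n → ℝ) ℂ) :
    IntegrableOn (fun x : Fin n → ℝ =>
        φ x * (∏ i, (x i : ℂ) ^ (μ - ((k * ((n : ℝ) - 1) : ℝ) : ℂ) - 1)) * (wk n k x : ℂ))
        (Rplus n) := by
  have h := integrable_pw (ofSchwartz φ).2 (s := fun _ => μ - (mu0 n k : ℂ) - 1)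
    (fun _ => by simp; linarith) (polyBd_V (n := n) hk le_rfl zero_le_one)
  exact h.integrableOn.congr_fun (fun x hx => (integrand_eq hk μ φ hx).symm) measurableSet_Rplus

lemma F_ofSchwartz {k : ℝ} (hk : 0 < k) (μ : ℂ) (φ : SchwartzMap (Fin n → ℝ) ℂ) :
    F k μ (ofSchwartz φ) = ((dnk n k : ℂ) * Gammank n k μ)⁻¹ *
      ∫ x in Rplus n,
        φ x * (∏ i, (x i : ℂ) ^ (μ - ((k * ((n : ℝ) - 1) : ℝ) : ℂ) - 1)) * (wk n k x : ℂ) := by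
  rw [setIntegral_congr_fun measurableSet_Rplus fun x hx => integrand_eq hk μ φ hx,
    setIntegral_eq_integral_of_forall_compl_eq_zero fun x hx => by
      rw [pw_of_notMem hx, mul_zero, zero_mul]]
  rfl

lemma isRieszFamily_riesz {k : ℝ} (hk : 0 < k) : IsRieszFamily n k (riesz hk) := by
  refine ⟨fun φ μ₁ => ?_, fun μ hμ φ => ?_⟩
  -- The value of `shift` jumps with `μ`, so near `μ₁` the family is compared with the continuation `G`
  -- for the fixed number of steps that suffices on `Re μ > Re μ₁ - 1`.
  · have hN : mu0 n k < (μ₁ - 1).re + shift n k (μ₁ - 1) := shift_spec k _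
    rw [Complex.sub_re, Complex.one_re] at hN
    refine (differentiableAt_G hk (N := shift n k (μ₁ - 1)) (by linarith)
      (ofSchwartz φ)).congr_of_eventuallyEq ?_
    have : {z : ℂ | μ₁.re - 1 < z.re} ∈ nhds μ₁ :=
      (isOpen_lt continuous_const Complex.continuous_re).mem_nhds (by simp)
    filter_upwards [this] with z hz
    rw [riesz_apply]
    exact G_eq' hk (by linarith) (shift_spec k z) _
  · rw [riesz_apply, ← F_ofSchwartz hk,
      G_eq hk (Nat.zero_le _) (by simpa using! hμ)]
    simp [G]

lemma isRieszFamily_unique {k : ℝ} {R₁ R₂ : ℂ → (SchwartzMap (Fin n → ℝ) ℂ →L[ℂ] ℂ)}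
    (h₁ : IsRieszFamily n k R₁) (h₂ : IsRieszFamily n k R₂) : R₁ = R₂ := by
  ext μ φ
  have ha₁ : AnalyticOnNhd ℂ (fun μ => R₁ μ φ) Set.univ :=
    (h₁.1 φ).differentiableOn.analyticOnNhd isOpen_univ
  have ha₂ : AnalyticOnNhd ℂ (fun μ => R₂ μ φ) Set.univ :=
    (h₂.1 φ).differentiableOn.analyticOnNhd isOpen_univ
  refine congrFun (ha₁.eq_of_eventuallyEq ha₂ (z₀ := ((k * ((n : ℝ) - 1) + 1 : ℝ) : ℂ)) ?_) μ
  have : {z : ℂ | k * ((n : ℝ) - 1) < z.re} ∈ nhds ((k * ((n : ℝ) - 1) + 1 : ℝ) : ℂ) :=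
    (isOpen_lt continuous_const Complex.continuous_re).mem_nhds
      (by rw [Set.mem_ofPred_eq, Complex.ofReal_re]; linarith)
  filter_upwards [this] with z hz
  rw [h₁.2 z hz φ, h₂.2 z hz φ]

end Riesz

/-- Existence and uniqueness of the holomorphic family of type-A Riesz
distributions, together with the absolute convergence of the defining integral for
`Re μ > μ₀`. -/
theorem riesz_family_exists_unique (n : ℕ) (hn : 2 ≤ n) (k : ℝ) (hk : 0 < k) :
    (∀ μ : ℂ, k * ((n : ℝ) - 1) < μ.re → ∀ φ : SchwartzMap (Fin n → ℝ) ℂ,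
      IntegrableOn (fun x : Fin n → ℝ =>
        φ x * (∏ i, (x i : ℂ) ^ (μ - ((k * ((n : ℝ) - 1) : ℝ) : ℂ) - 1)) * (wk n k x : ℂ))
        (Rplus n)) ∧
    (∃ R : ℂ → (SchwartzMap (Fin n → ℝ) ℂ →L[ℂ] ℂ), IsRieszFamily n k R) ∧
    (∀ R₁ R₂ : ℂ → (SchwartzMap (Fin n → ℝ) ℂ →L[ℂ] ℂ),
      IsRieszFamily n k R₁ → IsRieszFamily n k R₂ → R₁ = R₂) := by
  exact ⟨fun μ hμ φ => Riesz.integrableOn_riesz hk hμ φ,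
    ⟨Riesz.riesz hk, Riesz.isRieszFamily_riesz hk⟩,
    fun R₁ R₂ h₁ h₂ => Riesz.isRieszFamily_unique h₁ h₂⟩
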